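/- arXiv:2309.11229 — 6 statements merged into one kernel-verified Lean document; each statement's English description precedes it below -/
import Mathlib

section
/- Let n be an even positive integer and let f : F → 𝔽₂ be defined by f(x) = tr(x^7). For every a ∈ F with a ≠ 0, the linear kernel E_{D_a f} has cardinality 4 or 16. Moreover: if 3 does not divide n, then |{a ∈ F, a ≠ 0 : |E_{D_a f}| = 4}| = (11·2^{n−2} − 2)/3 and |{a ∈ F, a ≠ 0 : |E_{D_a f}| = 16}| = (2^{n−2} − 1)/3; if 3 divides n, then |{a ∈ F, a ≠ 0 : |E_{D_a f}| = 4}| = (2/3)·(2^n − 1) + (1/2)·wt(tr(x^7)) and |{a ∈ F, a ≠ 0 : |E_{D_a f}| = 16}| = (1/3)·(2^n − 1) − (1/2)·wt(tr(x^7)). -/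
noncomputable section

/-- `Fq n` is the finite field with `2 ^ n` elements. -/
abbrev Fq (n : ℕ) : Type := GaloisField 2 n

/-- The absolute trace map `tr x = x + x^2 + x^4 + ⋯ + x^(2^(n-1))` from `Fq n` to `𝔽₂`. -/
def tr {n : ℕ} (x : Fq n) : ZMod 2 := Algebra.trace (ZMod 2) (Fq n) x

/-- The derivative of `f` with respect to `a`. -/
def der {n : ℕ} (f : Fq n → ZMod 2) (a : Fq n) : Fq n → ZMod 2 :=
  fun x => f x + f (x + a)

/-- Iterated derivatives along a list of directions (head applied last/outermost). -/
def derIter {n : ℕ} (f : Fq n → ZMod 2) : List (Fq n) → (Fq n → ZMod 2)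
  | [] => f
  | a :: as => der (derIter f as) a

/-- `g` has algebraic degree at most `r`: all `(r+1)`-th order derivatives vanish. -/
def degLE {n : ℕ} (g : Fq n → ZMod 2) (r : ℕ) : Prop :=
  ∀ l : List (Fq n), l.length = r + 1 → derIter g l = fun _ => 0

/-- Hamming distance between two Boolean functions on `Fq n`. -/
def hdist {n : ℕ} (f g : Fq n → ZMod 2) : ℕ :=
  {x : Fq n | f x ≠ g x}.ncard

/-- The `r`-th order nonlinearity of `f`. -/
def nl {n : ℕ} (r : ℕ) (f : Fq n → ZMod 2) : ℕ :=
  sInf {d : ℕ | ∃ g : Fq n → ZMod 2, degLE g r ∧ d = hdist f g}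

/-- The linear kernel of `f`: directions along which the derivative is constant. -/
def linKer {n : ℕ} (f : Fq n → ZMod 2) : Set (Fq n) :=
  {b | ∃ c : ZMod 2, ∀ x, der f b x = c}

/-- The weight of a Boolean function on `Fq n`. -/
def wt {n : ℕ} (f : Fq n → ZMod 2) : ℕ := {x : Fq n | f x = 1}.ncard

namespace X7

lemma trace_sq (n : ℕ) (x : Fq n) : tr (x ^ 2) = tr x := by
  unfold tr
  have := Algebra.trace_eq_of_algEquiv (A := ZMod 2)
    (FiniteField.frobeniusAlgEquivOfAlgebraic (ZMod 2) (Fq n)) x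
  simpa using this

lemma tr_add (n : ℕ) (x y : Fq n) : tr (x + y) = tr x + tr y := by
  unfold tr; simp

lemma tr_one (n : ℕ) (hn : 0 < n) (hev : Even n) : tr (1 : Fq n) = 0 := by
  unfold tr
  have h := Algebra.trace_algebraMap (R := ZMod 2) (S := Fq n) (1 : ZMod 2)
  rw [map_one, GaloisField.finrank 2 hn.ne'] at h
  rw [h]
  obtain ⟨k, rfl⟩ := hev
  rw [nsmul_one]; push_cast
  exact CharTwo.add_self_eq_zero _

lemma tr_nondeg (n : ℕ) (c : Fq n) (h : ∀ x, tr (c * x) = 0) : c = 0 := by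
  exact (traceForm_nondegenerate (ZMod 2) (Fq n)).1 c h

lemma tr_as (n : ℕ) (e : Fq n) (h : tr e = 0) : ∃ w : Fq n, w ^ 2 + w = e := by
  let L : Fq n →ₗ[ZMod 2] Fq n :=
    (FiniteField.frobeniusAlgEquivOfAlgebraic (ZMod 2) (Fq n)).toLinearMap + LinearMap.id
  have hL : ∀ w, L w = w ^ 2 + w := fun w => by simp [L]
  have hker : LinearMap.ker L = Submodule.span (ZMod 2) {(1 : Fq n)} := by
    ext w
    rw [LinearMap.mem_ker, hL, Submodule.mem_span_singleton]
    constructor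
    · intro h
      have : w * (w + 1) = 0 := by linear_combination h
      rcases mul_eq_zero.1 this with h | h
      · exact ⟨0, by simp [h]⟩
      · exact ⟨1, by simp [(CharTwo.add_eq_zero.1 h)]⟩
    · rintro ⟨c, rfl⟩
      have hc : c = 0 ∨ c = 1 := by revert c; decide
      rcases hc with rfl | rfl
      · simp
      · simp [CharTwo.add_self_eq_zero]
  have h1 := LinearMap.finrank_range_add_finrank_ker L
  rw [hker, finrank_span_singleton one_ne_zero] at h1
  have h2 := LinearMap.finrank_range_add_finrank_ker (Algebra.trace (ZMod 2) (Fq n))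
  rw [LinearMap.range_eq_top.2 (Algebra.trace_surjective (ZMod 2) (Fq n)), finrank_top,
    Module.finrank_self] at h2
  have hle : LinearMap.range L ≤ LinearMap.ker (Algebra.trace (ZMod 2) (Fq n)) := by
    rintro _ ⟨w, rfl⟩
    rw [LinearMap.mem_ker, hL]
    have := tr_add n (w ^ 2) w
    rw [trace_sq, CharTwo.add_self_eq_zero] at this
    exact this
  have heq := Submodule.eq_of_le_of_finrank_eq hle (by omega)
  have : e ∈ LinearMap.range L := by rw [heq]; exact h
  obtain ⟨w, hw⟩ := this
  exact ⟨w, by rw [← hL, hw]⟩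

/-- the third derivative computation -/
lemma der_der (n : ℕ) (f : Fq n → ZMod 2) (hf : ∀ x, f x = tr (x ^ 7)) (a b x : Fq n) :
    der (der f a) b x = tr (a ^ 7 + b ^ 7 + (a + b) ^ 7) +
      tr ((a ^ 8 * b ^ 16 + a ^ 16 * b ^ 8 + a ^ 2 * b ^ 8 + a ^ 8 * b ^ 2 + a * b ^ 2 + a ^ 2 * b)
        * x ^ 4) := by
  have h2 : (2 : Fq n) = 0 := CharTwo.two_eq_zero
  have e : x ^ 7 + (x + a) ^ 7 + ((x + b) ^ 7 + (x + b + a) ^ 7) =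
      (a ^ 7 + b ^ 7 + (a + b) ^ 7) + ((a ^ 2 * b ^ 4 + a ^ 4 * b ^ 2) * x
        + (a * b ^ 4 + a ^ 4 * b) * x ^ 2 + (a * b ^ 2 + a ^ 2 * b) * x ^ 4) := by
    grind
  have hs : ∀ y z : Fq n, (y + z) ^ 2 = y ^ 2 + z ^ 2 := fun y z => CharTwo.add_sq y z
  have e1 : tr ((a ^ 2 * b ^ 4 + a ^ 4 * b ^ 2) * x) =
      tr ((a ^ 8 * b ^ 16 + a ^ 16 * b ^ 8) * x ^ 4) := by
    rw [← trace_sq, ← trace_sq, mul_pow, hs, mul_pow, hs]; congr 1; ring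
  have e2 : tr ((a * b ^ 4 + a ^ 4 * b) * x ^ 2) =
      tr ((a ^ 2 * b ^ 8 + a ^ 8 * b ^ 2) * x ^ 4) := by
    rw [← trace_sq, mul_pow, hs]; congr 1; ring
  unfold der
  rw [hf, hf, hf, hf, ← tr_add, ← tr_add, ← tr_add, e, tr_add n (_ + _ + _) (_ + _ + _)]
  congr 1
  rw [tr_add, tr_add, e1, e2, ← tr_add, ← tr_add]
  congr 1; ring

lemma mem_linKer (n : ℕ) (f : Fq n → ZMod 2) (hf : ∀ x, f x = tr (x ^ 7)) (a b : Fq n) :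
    b ∈ linKer (der f a) ↔
      a ^ 8 * b ^ 16 + a ^ 16 * b ^ 8 + a ^ 2 * b ^ 8 + a ^ 8 * b ^ 2 + a * b ^ 2 + a ^ 2 * b = 0 := by
  constructor
  · rintro ⟨c, hc⟩
    set P := a ^ 8 * b ^ 16 + a ^ 16 * b ^ 8 + a ^ 2 * b ^ 8 + a ^ 8 * b ^ 2 + a * b ^ 2 + a ^ 2 * b
      with hP
    have hsurj : Function.Surjective (fun x : Fq n => x ^ 2) :=
      Finite.injective_iff_surjective.1 (fun x y h => CharTwo.sq_injective h)
    apply tr_nondeg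
    intro y
    obtain ⟨z, rfl⟩ := hsurj y
    obtain ⟨x, rfl⟩ := hsurj z
    have h0 := hc 0
    have hx := hc x
    rw [der_der n f hf, ← hP] at h0 hx
    rw [← h0] at hx
    have := add_left_cancel hx
    show tr (P * (x ^ 2) ^ 2) = 0
    rw [show ((x ^ 2) ^ 2 : Fq n) = x ^ 4 by ring]
    rw [this]; simp [tr]
  · intro h
    refine ⟨tr (a ^ 7 + b ^ 7 + (a + b) ^ 7), fun x => ?_⟩
    rw [der_der n f hf, h]; simp [tr]


section generic

variable {F : Type*} [Field F] [Fintype F] [DecidableEq F] [CharP F 2] (t : F → ZMod 2)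

lemma zmod2 (x : ZMod 2) : x = 0 ∨ x = 1 := by revert x; decide

lemma card_pre (tas : ∀ e, t e = 0 → ∃ w, w ^ 2 + w = e) (K : Finset F)
    (hK : ∀ u ∈ K, t u = 0) :
    (Finset.univ.filter (fun y : F => y ^ 2 + y ∈ K)).card = 2 * K.card := by
  have h2 : (2 : F) = 0 := CharTwo.two_eq_zero
  rw [Finset.card_eq_sum_card_fiberwise (f := fun y : F => y ^ 2 + y) (t := K)
    (by intro y hy; simpa using hy)]
  rw [Finset.sum_const_nat (m := 2), mul_comm]
  intro u hu
  obtain ⟨w, hw⟩ := tas u (hK u hu)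
  have : (Finset.univ.filter (fun y : F => y ^ 2 + y ∈ K)).filter (fun y => y ^ 2 + y = u)
      = {w, w + 1} := by
    ext y
    simp only [Finset.mem_filter, Finset.mem_univ, true_and, Finset.mem_insert,
      Finset.mem_singleton]
    constructor
    · rintro ⟨-, h⟩
      have : (y - w) * (y - (w + 1)) = 0 := by
        linear_combination h - hw - (y - w ^ 2 + y * w - w) * h2
      rcases mul_eq_zero.1 this with h | h
      · left; exact sub_eq_zero.1 h
      · right; exact sub_eq_zero.1 h
    · intro h
      have : y ^ 2 + y = u := by
        rcases h with rfl | rfl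
        · exact hw
        · linear_combination hw + (w + 1) * h2
      exact ⟨this ▸ hu, this⟩
  rw [this, Finset.card_pair]
  simp

lemma four_root (o : F) (ho : o ^ 2 + o = 1) (v : F) :
    v ^ 4 + v = 0 ↔ v ∈ ({0, 1, o, o + 1} : Finset F) := by
  have h2 : (2 : F) = 0 := CharTwo.two_eq_zero
  simp only [Finset.mem_insert, Finset.mem_singleton]
  constructor
  · intro h
    have : v * ((v - 1) * ((v - o) * (v - (o + 1)))) = 0 := by grind
    simpa [sub_eq_zero] using this
  · rintro (rfl | rfl | rfl | rfl) <;> grind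

lemma four_card (o : F) (ho : o ^ 2 + o = 1) : ({0, 1, o, o + 1} : Finset F).card = 4 := by
  have h2 : (2 : F) = 0 := CharTwo.two_eq_zero
  have h0 : o ≠ 0 := by rintro rfl; simp at ho
  have h1 : o ≠ 1 := by rintro rfl; grind
  have h3 : o + 1 ≠ 0 := by grind
  have h4 : o + 1 ≠ 1 := by grind
  rw [Finset.card_insert_of_notMem, Finset.card_insert_of_notMem, Finset.card_pair] <;> grind

/-- The additive polynomial. -/
def G (c u : F) : F := c ^ 3 * u ^ 8 + c * u ^ 4 + c * u ^ 2 + u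

lemma G_iff (c u : F) : G c u = 0 ↔ c * u ^ 4 + u = 0 ∨ c * (c * u ^ 4 + u) = 1 := by
  have h2 : (2 : F) = 0 := CharTwo.two_eq_zero
  have : G c u = (c * u ^ 4 + u) * (c * (c * u ^ 4 + u) - 1) := by unfold G; grind
  rw [this, mul_eq_zero, sub_eq_zero]

lemma t_as (tadd : ∀ x y, t (x + y) = t x + t y) (tsq : ∀ x, t (x ^ 2) = t x)
    (w : F) : t (w ^ 2 + w) = 0 := by
  rw [tadd, tsq, CharTwo.add_self_eq_zero]

lemma t_sol (tadd : ∀ x y, t (x + y) = t x + t y) (tsq : ∀ x, t (x ^ 2) = t x)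
    (c u : F) (h : c * (c * u ^ 4 + u) = 1) : t u = 0 := by
  have h2 : (2 : F) = 0 := CharTwo.two_eq_zero
  rw [← tsq, ← t_as t tadd tsq (c * u ^ 3)]
  congr 1
  linear_combination (-u ^ 2) * h

lemma scale (c e v : F) (he : e ^ 3 * c = 1) :
    (c * (e * v) ^ 4 + e * v = 0 ↔ v ^ 4 + v = 0) ∧
    (c * (c * (e * v) ^ 4 + e * v) = 1 ↔ v ^ 4 + v = e ^ 2) := by
  have he0 : e ≠ 0 := by rintro rfl; simp at he
  have hc0 : c ≠ 0 := by rintro rfl; simp at he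
  have : c * (e * v) ^ 4 + e * v = e * (v ^ 4 + v) := by linear_combination e * v ^ 4 * he
  rw [this]
  constructor
  · simp [he0]
  · constructor
    · intro h
      apply mul_left_cancel₀ (mul_ne_zero hc0 he0)
      linear_combination h - he
    · intro h
      linear_combination c * e * h + he

/-- Kernel of `G` with trace zero. -/
def KK (c : F) : Finset F := Finset.univ.filter (fun u => G c u = 0 ∧ t u = 0)

lemma K_good (tadd : ∀ x y, t (x + y) = t x + t y) (tsq : ∀ x, t (x ^ 2) = t x) (tas : ∀ e, t e = 0 → ∃ w, w ^ 2 + w = e)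
    (o : F) (ho : o ^ 2 + o = 1) (c e : F) (he : e ^ 3 * c = 1) (h1 : t e = 0)
    (h2 : t (o * e) = 0) : (KK t c).card = 8 := by
  have hch : (2 : F) = 0 := CharTwo.two_eq_zero
  have he0 : e ≠ 0 := by rintro rfl; simp at he
  have t0 : t 0 = 0 := by have := tadd 0 0; simpa using this
  have h3 : t ((o + 1) * e) = 0 := by rw [add_mul, tadd, one_mul, h1, h2, add_zero]
  -- solve v^4+v=e^2
  obtain ⟨w, hw⟩ := tas (e ^ 2) (by rw [tsq, h1])
  have hw0 : t w = 0 := by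
    have a1 : t (o * e ^ 2) = 0 := by
      rw [← h3, ← tsq ((o + 1) * e)]; congr 1; grind
    have a2 : o * e ^ 2 + w ^ 2 = ((o * w) ^ 2 + o * w) := by grind
    have a3 := t_as t tadd tsq (o * w)
    rw [← a2, tadd, a1, tsq, zero_add] at a3
    exact a3
  obtain ⟨v, hv⟩ := tas w hw0
  have hv4 : v ^ 4 + v = e ^ 2 := by grind
  have hK : KK t c = (({0, 1, o, o + 1} : Finset F) ∪
      ({0, 1, o, o + 1} : Finset F).image (fun x => x + v)).image (fun x => e * x) := by
    ext u
    have hu : ∃ x, u = e * x := ⟨e⁻¹ * u, by field_simp⟩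
    obtain ⟨x, rfl⟩ := hu
    have hmem : e * x ∈ (({0, 1, o, o + 1} : Finset F) ∪
      ({0, 1, o, o + 1} : Finset F).image (fun x => x + v)).image (fun x => e * x) ↔
      x ^ 4 + x = 0 ∨ x ^ 4 + x = e ^ 2 := by
      rw [Finset.mem_image]
      simp only [mul_right_inj' he0, exists_eq_right]
      rw [Finset.mem_union, ← four_root o ho, Finset.mem_image]
      refine or_congr Iff.rfl ?_
      constructor
      · rintro ⟨y, hy, rfl⟩
        rw [← four_root o ho] at hy
        grind
      · intro h
        refine ⟨x - v, ?_, by ring⟩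
        rw [← four_root o ho]
        grind
    rw [hmem]
    unfold KK
    simp only [Finset.mem_filter, Finset.mem_univ, true_and]
    rw [G_iff, (scale c e x he).1, (scale c e x he).2]
    constructor
    · exact fun h => h.1
    · intro h
      refine ⟨h, ?_⟩
      rcases h with h | h
      · rw [four_root o ho] at h
        simp only [Finset.mem_insert, Finset.mem_singleton] at h
        rcases h with rfl | rfl | rfl | rfl
        · rw [mul_zero, t0]
        · rw [mul_one, h1]
        · rw [mul_comm, h2]
        · rw [mul_comm, h3]
      · exact t_sol t tadd tsq c _ ((scale c e x he).2.2 h)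
  rw [hK, Finset.card_image_of_injective _ (mul_right_injective₀ he0), Finset.card_union_of_disjoint,
    Finset.card_image_of_injective _ (add_left_injective v), four_card o ho]
  rw [Finset.disjoint_left]
  intro x hx hx'
  rw [Finset.mem_image] at hx'
  obtain ⟨y, hy, rfl⟩ := hx'
  rw [← four_root o ho] at hx hy
  have : e ^ 2 = 0 := by grind
  exact he0 (by simpa using this)

lemma K_bad (tadd : ∀ x y, t (x + y) = t x + t y) (tsq : ∀ x, t (x ^ 2) = t x)
    (o : F) (ho : o ^ 2 + o = 1) (c : F) (hc : c ≠ 0)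
    (hb : ¬ ∃ e, e ^ 3 * c = 1 ∧ t e = 0 ∧ t (o * e) = 0) : (KK t c).card = 2 := by
  have hch : (2 : F) = 0 := CharTwo.two_eq_zero
  have t0 : t 0 = 0 := by have := tadd 0 0; simpa using this
  have ho3 : o ^ 3 = 1 := by grind
  by_cases hcube : ∃ e, e ^ 3 * c = 1
  · -- choose the root with trace zero
    have : ∃ e, e ^ 3 * c = 1 ∧ t e = 0 := by
      obtain ⟨e, he⟩ := hcube
      rcases zmod2 (t e) with h | h
      · exact ⟨e, he, h⟩
      rcases zmod2 (t (o * e)) with h' | h'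
      · exact ⟨o * e, by rw [mul_pow, ho3, one_mul, he], h'⟩
      · refine ⟨o ^ 2 * e, by rw [mul_pow, ← pow_mul, mul_comm 2 3, pow_mul, ho3]; simpa using he, ?_⟩
        have : o ^ 2 * e = o * e + e := by grind
        rw [this, tadd, h, h', CharTwo.add_self_eq_zero]
    obtain ⟨e, he, h1⟩ := this
    have he0 : e ≠ 0 := by rintro rfl; simp at he
    have h2 : t (o * e) = 1 := by
      rcases zmod2 (t (o * e)) with h | h
      · exact absurd ⟨e, he, h1, h⟩ hb
      · exact h
    have hK : KK t c = {0, e} := by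
      ext u
      have hu : ∃ x, u = e * x := ⟨e⁻¹ * u, by field_simp⟩
      obtain ⟨x, rfl⟩ := hu
      unfold KK
      simp only [Finset.mem_filter, Finset.mem_univ, true_and, Finset.mem_insert,
        Finset.mem_singleton]
      rw [G_iff, (scale c e x he).1, (scale c e x he).2]
      constructor
      · rintro ⟨h | h, ht⟩
        · rw [four_root o ho] at h
          simp only [Finset.mem_insert, Finset.mem_singleton] at h
          rcases h with rfl | rfl | rfl | rfl
          · left; simp
          · right; simp
          · rw [mul_comm, h2] at ht; exact absurd ht (by decide)
          · rw [mul_comm, add_mul, tadd, h2, one_mul, h1] at ht; exact absurd ht (by decide)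
        · exfalso
          have h' : (x + o) ^ 4 + (x + o) = e ^ 2 := by grind
          have := t_sol t tadd tsq c _ ((scale c e (x + o) he).2.2 h')
          rw [mul_add, tadd, ht, mul_comm, h2] at this
          exact absurd this (by decide)
      · rintro (h | h)
        · have : x = 0 := by simpa [he0] using h
          subst this
          exact ⟨Or.inl (by simp), by rw [h, t0]⟩
        · have : x = 1 := by simpa [he0] using h
          subst this
          refine ⟨Or.inl (by rw [one_pow]; exact CharTwo.add_self_eq_zero _), by rw [h, h1]⟩
    rw [hK, Finset.card_pair (Ne.symm he0)]
  · have hz : ∀ u, c * u ^ 4 + u = 0 → u = 0 := by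
      intro u hu
      by_contra h0
      apply hcube
      refine ⟨u, ?_⟩
      apply mul_left_cancel₀ h0
      linear_combination hu - u * hch
    have hs : ∀ x y : F, (x - y) ^ 4 = x ^ 4 - y ^ 4 := by intro x y; grind
    have hinj : Function.Injective (fun u : F => c * u ^ 4 + u) := by
      intro x y h
      have := hz (x - y) (by rw [hs]; linear_combination h)
      exact sub_eq_zero.1 this
    obtain ⟨u0, hu0⟩ := (Finite.injective_iff_surjective.1 hinj) c⁻¹
    have hu0' : c * u0 ^ 4 + u0 = c⁻¹ := hu0
    have hu00 : u0 ≠ 0 := by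
      rintro rfl
      simp at hu0'
      exact hc hu0'.symm
    have hcc : c * (c * u0 ^ 4 + u0) = 1 := by rw [hu0', mul_inv_cancel₀ hc]
    have hK : KK t c = {0, u0} := by
      ext u
      unfold KK
      simp only [Finset.mem_filter, Finset.mem_univ, true_and, Finset.mem_insert,
        Finset.mem_singleton]
      rw [G_iff]
      constructor
      · rintro ⟨h | h, -⟩
        · left; exact hz u h
        · right
          apply hinj
          show c * u ^ 4 + u = c * u0 ^ 4 + u0
          rw [hu0']
          exact eq_inv_of_mul_eq_one_right h
      · rintro (rfl | rfl)
        · exact ⟨Or.inl (by simp), t0⟩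
        · exact ⟨Or.inr hcc, t_sol t tadd tsq c _ hcc⟩
    rw [hK, Finset.card_pair (Ne.symm hu00)]

/-- The set of good `a`. -/
def good (o a : F) : Prop := ∃ e, e ^ 3 * a ^ 7 = 1 ∧ t e = 0 ∧ t (o * e) = 0

lemma count_S (tadd : ∀ x y, t (x + y) = t x + t y)
    (o : F) (ho : o ^ 2 + o = 1) :
    2 * (Finset.univ.filter (fun g : F => g ≠ 0 ∧ t (g ^ 7) = 0 ∧ t (o * g ^ 7) = 0)).card + 2
      + 3 * (Finset.univ.filter (fun g : F => t (g ^ 7) = 1)).card = 2 * Fintype.card F := by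
  have hch : (2 : F) = 0 := CharTwo.two_eq_zero
  have t0 : t 0 = 0 := by have := tadd 0 0; simpa using this
  have ho0 : o ≠ 0 := by rintro rfl; simp at ho
  have ho3 : o ^ 3 = 1 := by grind
  have ho7 : o ^ 7 = o := by grind
  have hA : (Finset.univ.filter (fun g : F => t (g ^ 7) = 0 ∧ t (o * g ^ 7) = 0)).card =
      (Finset.univ.filter (fun g : F => g ≠ 0 ∧ t (g ^ 7) = 0 ∧ t (o * g ^ 7) = 0)).card + 1 := by
    rw [← Finset.card_insert_of_notMem (a := (0 : F)) (by simp)]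
    congr 1
    ext g
    simp only [Finset.mem_filter, Finset.mem_univ, true_and, Finset.mem_insert]
    by_cases hg : g = 0
    · subst hg; simp [t0]
    · simp [hg]
  have hB : ∀ p : F, p ≠ 0 → ∀ q : F, p ^ 7 = q →
      (Finset.univ.filter (fun g : F => t (q * g ^ 7) = 1)).card =
      (Finset.univ.filter (fun g : F => t (g ^ 7) = 1)).card := by
    intro p hp q hq
    apply Finset.card_bij (fun g _ => p * g)
    · intro g hg
      simp only [Finset.mem_filter, Finset.mem_univ, true_and] at hg ⊢
      rw [mul_pow, hq, hg]
    · intro g _ g' _ h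
      exact mul_left_cancel₀ hp h
    · intro g hg
      simp only [Finset.mem_filter, Finset.mem_univ, true_and] at hg
      refine ⟨p⁻¹ * g, ?_, by field_simp⟩
      simp only [Finset.mem_filter, Finset.mem_univ, true_and]
      rw [← hq, ← mul_pow, mul_inv_cancel_left₀ hp, hg]
  have hB1 := hB o ho0 o ho7
  have hB2 := hB (o ^ 2) (pow_ne_zero 2 ho0) (o + 1) (by grind)
  have key : 2 * (Finset.univ.filter (fun g : F => t (g ^ 7) = 0 ∧ t (o * g ^ 7) = 0)).card +
      ((Finset.univ.filter (fun g : F => t (g ^ 7) = 1)).card +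
      (Finset.univ.filter (fun g : F => t (o * g ^ 7) = 1)).card +
      (Finset.univ.filter (fun g : F => t ((o + 1) * g ^ 7) = 1)).card) = 2 * Fintype.card F := by
    simp only [Finset.card_filter]
    rw [← Finset.card_univ, Finset.card_eq_sum_ones, Finset.mul_sum, Finset.mul_sum,
      ← Finset.sum_add_distrib, ← Finset.sum_add_distrib, ← Finset.sum_add_distrib]
    apply Finset.sum_congr rfl
    intro g _
    rw [add_mul, tadd, one_mul]
    generalize t (g ^ 7) = x
    generalize t (o * g ^ 7) = y
    revert x y; decide
  omega

lemma count_good (o : F) (ho : o ^ 2 + o = 1) [DecidablePred (fun a : F => a ≠ 0 ∧ good t o a)]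
    (tadd : ∀ x y, t (x + y) = t x + t y) :
    3 * (Finset.univ.filter (fun a : F => a ≠ 0 ∧ good t o a)).card =
    (Finset.univ.filter (fun g : F => g ≠ 0 ∧ t (g ^ 7) = 0 ∧ t (o * g ^ 7) = 0)).card := by
  have hch : (2 : F) = 0 := CharTwo.two_eq_zero
  have ho0 : o ≠ 0 := by rintro rfl; simp at ho
  have ho3 : o ^ 3 = 1 := by grind
  have ho7 : o ^ 7 = o := by grind
  have h1 : o ≠ 1 := by rintro rfl; grind
  symm
  rw [Finset.card_eq_sum_card_fiberwise (f := fun g : F => (g ^ 3)⁻¹)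
    (t := Finset.univ.filter (fun a : F => a ≠ 0 ∧ good t o a))]
  · rw [Finset.sum_const_nat (m := 3), mul_comm]
    intro a ha
    simp only [Finset.mem_filter, Finset.mem_univ, true_and] at ha
    obtain ⟨ha0, e, he, h1', h2'⟩ := ha
    have he0 : e ≠ 0 := by rintro rfl; simp at he
    have hg7 : (e * a ^ 2) ^ 7 = e := by
      linear_combination (e * (e ^ 3 * a ^ 7 + 1)) * he
    have hg3 : (e * a ^ 2) ^ 3 * a = 1 := by linear_combination he
    have hg0 : e * a ^ 2 ≠ 0 := mul_ne_zero he0 (pow_ne_zero 2 ha0)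
    generalize e * a ^ 2 = g at *
    have hset : (Finset.univ.filter (fun g : F => g ≠ 0 ∧ t (g ^ 7) = 0 ∧ t (o * g ^ 7) = 0)).filter
        (fun g => (g ^ 3)⁻¹ = a) = {g, o * g, (o + 1) * g} := by
      ext x
      simp only [Finset.mem_filter, Finset.mem_univ, true_and, Finset.mem_insert,
        Finset.mem_singleton]
      have ha' : a = (g ^ 3)⁻¹ := eq_inv_of_mul_eq_one_right hg3
      rw [ha', inv_inj]
      constructor
      · rintro ⟨-, h⟩
        have : (x - g) * ((x - o * g) * (x - (o + 1) * g)) = 0 := by grind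
        simpa [sub_eq_zero] using this
      · rintro (rfl | rfl | rfl)
        · exact ⟨⟨hg0, by rw [hg7, h1'], by rw [hg7, h2']⟩, rfl⟩
        · refine ⟨⟨mul_ne_zero ho0 hg0, ?_, ?_⟩, ?_⟩
          · rw [mul_pow, hg7, ho7, h2']
          · rw [mul_pow, hg7, ho7, ← mul_assoc, show o * o = o + 1 by grind, add_mul, tadd, one_mul,
              h1', h2', add_zero]
          · rw [mul_pow, ho3, one_mul]
        · refine ⟨⟨mul_ne_zero (by grind) hg0, ?_, ?_⟩, ?_⟩
          · rw [mul_pow, hg7, show (o + 1) ^ 7 = o + 1 by grind, add_mul, tadd, one_mul,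
              h1', h2', add_zero]
          · rw [mul_pow, hg7, show (o + 1) ^ 7 = o + 1 by grind, ← mul_assoc,
              show o * (o + 1) = 1 by grind, one_mul, h1']
          · rw [mul_pow, show (o + 1) ^ 3 = 1 by grind, one_mul]
    rw [hset, Finset.card_insert_of_notMem, Finset.card_pair]
    · intro h
      have := mul_right_cancel₀ hg0 h
      simp at this
    · simp only [Finset.mem_insert, Finset.mem_singleton, not_or]
      constructor
      · intro h; exact h1 (mul_right_cancel₀ hg0 (by rw [one_mul, ← h]))
      · intro h
        have : (1 : F) = o + 1 := mul_right_cancel₀ hg0 (by rw [one_mul, ← h])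
        simp at this; exact ho0 this
  · intro g hg
    simp only [Finset.coe_filter, Finset.mem_univ, true_and, Set.mem_ofPred_eq] at hg ⊢
    obtain ⟨hg0, h1', h2'⟩ := hg
    exact ⟨inv_ne_zero (pow_ne_zero 3 hg0), g ^ 7, by field_simp, h1', h2'⟩

lemma count_wt (tadd : ∀ x y, t (x + y) = t x + t y)
    (th : F) (hth : t th = 1) :
    2 * (Finset.univ.filter (fun g : F => t g = 1)).card = Fintype.card F := by
  have h1 : (Finset.univ.filter (fun g : F => t g = 1)).card =
      (Finset.univ.filter (fun g : F => ¬ t g = 1)).card := by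
    have hx : ∀ x : ZMod 2, (x + 1 = 1 ↔ ¬ x = 1) := by decide
    apply Finset.card_bij (fun g _ => g + th)
    · intro g hg
      simp only [Finset.mem_filter, Finset.mem_univ, true_and] at hg ⊢
      rw [tadd, hth, hg]; decide
    · intro g _ g' _ h
      exact add_right_cancel h
    · intro g hg
      simp only [Finset.mem_filter, Finset.mem_univ, true_and] at hg
      refine ⟨g + th, ?_, by rw [add_assoc, CharTwo.add_self_eq_zero, add_zero]⟩
      simp only [Finset.mem_filter, Finset.mem_univ, true_and]
      rw [tadd, hth, hx]; exact hg
  have := Finset.card_filter_add_card_filter_not (s := (Finset.univ : Finset F)) (fun g : F => t g = 1)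
  rw [Finset.card_univ] at this
  omega

end generic

open Classical in
lemma linKer_ncard (n : ℕ) [Fintype (Fq n)] (f : Fq n → ZMod 2) (hf : ∀ x, f x = tr (x ^ 7))
    (a : Fq n) (ha : a ≠ 0) :
    (linKer (der f a)).ncard = 2 * (KK (F := Fq n) tr (a ^ 7)).card := by
  have hch : (2 : Fq n) = 0 := CharTwo.two_eq_zero
  have hset : linKer (der f a) = (fun y => a * y) ''
      ((Finset.univ.filter (fun y : Fq n => y ^ 2 + y ∈ KK (F := Fq n) tr (a ^ 7)) : Finset (Fq n)) :
        Set (Fq n)) := by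
    ext b
    obtain ⟨y, rfl⟩ : ∃ y, b = a * y := ⟨a⁻¹ * b, by field_simp⟩
    rw [mem_linKer n f hf, (mul_right_injective₀ ha).mem_set_image]
    have hG : a ^ 8 * (a * y) ^ 16 + a ^ 16 * (a * y) ^ 8 + a ^ 2 * (a * y) ^ 8 +
        a ^ 8 * (a * y) ^ 2 + a * (a * y) ^ 2 + a ^ 2 * (a * y) = a ^ 3 * G (a ^ 7) (y ^ 2 + y) := by
      have e4 : (y ^ 2 + y) ^ 4 = y ^ 8 + y ^ 4 := by grind
      have e2 : (y ^ 2 + y) ^ 2 = y ^ 4 + y ^ 2 := by grind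
      have e8 : (y ^ 2 + y) ^ 8 = y ^ 16 + y ^ 8 := by
        rw [show (y ^ 2 + y) ^ 8 = ((y ^ 2 + y) ^ 4) ^ 2 by ring, e4, CharTwo.add_sq]; ring
      unfold G
      rw [e8, e4, e2]
      linear_combination (- a ^ 10 * y ^ 4) * hch
    rw [hG]
    simp only [Finset.coe_filter, Finset.mem_univ, true_and, Set.mem_ofPred_eq, KK,
      Finset.mem_filter, mul_eq_zero]
    simp [t_as (F := Fq n) tr (tr_add n) (trace_sq n), ha]
  rw [hset, Set.ncard_image_of_injective _ (mul_right_injective₀ ha), Set.ncard_coe_finset]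
  apply card_pre (F := Fq n) tr (tr_as n)
  intro u hu
  exact (Finset.mem_filter.1 hu).2.2

lemma coprime7 (n : ℕ) (h : ¬ 3 ∣ n) : Nat.Coprime 7 (2 ^ n - 1) := by
  rw [Nat.Prime.coprime_iff_not_dvd (by norm_num)]
  intro hd
  have h1 : 1 ≤ 2 ^ n := Nat.one_le_two_pow
  have hm : 2 ^ n % 7 = 1 := by omega
  have hn : n = 3 * (n / 3) + n % 3 := (Nat.div_add_mod n 3).symm
  rw [hn, pow_add, pow_mul, Nat.mul_mod, Nat.pow_mod] at hm
  norm_num at hm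
  have : n % 3 = 1 ∨ n % 3 = 2 := by omega
  rcases this with h | h <;> rw [h] at hm <;> norm_num at hm

lemma pow7_inj (n : ℕ) (hn : 0 < n) (h : ¬ 3 ∣ n) :
    Function.Injective (fun x : Fq n => x ^ 7) := by
  intro x y hxy
  have hxy : x ^ 7 = y ^ 7 := hxy
  by_cases hy : y = 0
  · subst hy; simpa using hxy
  have h7 : (x / y) ^ 7 = 1 := by rw [div_pow, hxy, div_self (pow_ne_zero 7 hy)]
  have h0 : x / y ≠ 0 := by intro h0; rw [h0] at h7; simp at h7
  have : Fintype (Fq n) := Fintype.ofFinite _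
  have hq : (x / y) ^ (2 ^ n - 1) = 1 := by
    have := FiniteField.pow_card_sub_one_eq_one (x / y) h0
    rwa [← Nat.card_eq_fintype_card, GaloisField.card 2 n hn.ne'] at this
  have hg := orderOf_dvd_of_pow_eq_one h7
  have hg' := orderOf_dvd_of_pow_eq_one hq
  have := Nat.eq_one_of_dvd_coprimes (coprime7 n h) hg hg'
  rw [orderOf_eq_one_iff, div_eq_one_iff_eq hy] at this
  exact this

open Classical in
lemma main_nat (n : ℕ) (hn : 0 < n) (hev : Even n)
    (f : Fq n → ZMod 2) (hf : ∀ x, f x = tr (x ^ 7)) :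
    (∀ a : Fq n, a ≠ 0 →
      (linKer (der f a)).ncard = 4 ∨ (linKer (der f a)).ncard = 16) ∧
    {a : Fq n | a ≠ 0 ∧ (linKer (der f a)).ncard = 4}.ncard +
      {a : Fq n | a ≠ 0 ∧ (linKer (der f a)).ncard = 16}.ncard + 1 = 2 ^ n ∧
    6 * {a : Fq n | a ≠ 0 ∧ (linKer (der f a)).ncard = 16}.ncard + 2 +
      3 * wt (fun x : Fq n => tr (x ^ 7)) = 2 * 2 ^ n ∧
    (¬ 3 ∣ n → 2 * wt (fun x : Fq n => tr (x ^ 7)) = 2 ^ n) := by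
  have : Fintype (Fq n) := Fintype.ofFinite _
  have hcard : Fintype.card (Fq n) = 2 ^ n := by
    rw [← Nat.card_eq_fintype_card, GaloisField.card 2 n hn.ne']
  obtain ⟨o, ho⟩ := tr_as n 1 (tr_one n hn hev)
  have hgood : ∀ a : Fq n, a ≠ 0 → good (F := Fq n) tr o a → (linKer (der f a)).ncard = 16 := by
    rintro a ha ⟨e, he, h1, h2⟩
    rw [linKer_ncard n f hf a ha,
      K_good (F := Fq n) tr (tr_add n) (trace_sq n) (tr_as n) o ho _ e he h1 h2]
  have hbad : ∀ a : Fq n, a ≠ 0 → ¬ good (F := Fq n) tr o a → (linKer (der f a)).ncard = 4 := by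
    intro a ha hb
    rw [linKer_ncard n f hf a ha,
      K_bad (F := Fq n) tr (tr_add n) (trace_sq n) o ho _ (pow_ne_zero 7 ha) hb]
  have h16 : {a : Fq n | a ≠ 0 ∧ (linKer (der f a)).ncard = 16} =
      ((Finset.univ.filter (fun a : Fq n => a ≠ 0 ∧ good (F := Fq n) tr o a) : Finset (Fq n)) :
        Set (Fq n)) := by
    ext a
    simp only [Finset.coe_filter, Finset.mem_univ, true_and, Set.mem_ofPred_eq]
    refine and_congr_right fun ha => ⟨fun h => ?_, hgood a ha⟩
    by_contra hb
    rw [hbad a ha hb] at h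
    omega
  have h4 : {a : Fq n | a ≠ 0 ∧ (linKer (der f a)).ncard = 4} =
      ((Finset.univ.filter (fun a : Fq n => a ≠ 0 ∧ ¬ good (F := Fq n) tr o a) : Finset (Fq n)) :
        Set (Fq n)) := by
    ext a
    simp only [Finset.coe_filter, Finset.mem_univ, true_and, Set.mem_ofPred_eq]
    refine and_congr_right fun ha => ⟨fun h hb => ?_, hbad a ha⟩
    rw [hgood a ha hb] at h
    omega
  have hwt : wt (fun x : Fq n => tr (x ^ 7)) =
      (Finset.univ.filter (fun g : Fq n => tr (g ^ 7) = 1)).card := by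
    unfold wt
    rw [← Set.ncard_coe_finset]
    congr 1; ext; simp
  rw [h16, h4, Set.ncard_coe_finset, Set.ncard_coe_finset, hwt]
  refine ⟨fun a ha => ?_, ?_, ?_, ?_⟩
  · by_cases hg : good (F := Fq n) tr o a
    · right; exact hgood a ha hg
    · left; exact hbad a ha hg
  · have h1 := Finset.card_filter_add_card_filter_not
      (s := Finset.univ.filter (fun a : Fq n => a ≠ 0)) (fun a : Fq n => good (F := Fq n) tr o a)
    rw [Finset.filter_filter, Finset.filter_filter, Finset.filter_ne',
      Finset.card_erase_of_mem (Finset.mem_univ _), Finset.card_univ, hcard] at h1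
    have : 1 ≤ 2 ^ n := Nat.one_le_two_pow
    omega
  · have h1 := count_S (F := Fq n) tr (tr_add n) o ho
    have h2 := count_good (F := Fq n) tr o ho (tr_add n)
    rw [hcard] at h1
    omega
  · intro h3
    obtain ⟨th, hth⟩ := Algebra.trace_surjective (ZMod 2) (Fq n) 1
    have h1 := count_wt (F := Fq n) tr (tr_add n) th hth
    rw [hcard] at h1
    rw [← h1]
    congr 1
    have hinj := pow7_inj n hn h3
    apply Finset.card_bij (fun g _ => g ^ 7)
    · intro g hg
      simpa using hg
    · intro g _ g' _ h
      exact hinj h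
    · intro g hg
      obtain ⟨x, rfl⟩ := (Finite.injective_iff_surjective.1 hinj) g
      exact ⟨x, by simpa using hg, rfl⟩

end X7

/-- Distribution of linear-kernel sizes of derivatives of `tr(x^7)`, even `n`. -/
theorem linKer_card_der_tr_x7_even (n : ℕ) (hn : 0 < n) (hev : Even n)
    (f : Fq n → ZMod 2) (hf : ∀ x, f x = tr (x ^ 7)) :
    (∀ a : Fq n, a ≠ 0 →
      (linKer (der f a)).ncard = 4 ∨ (linKer (der f a)).ncard = 16) ∧
    (¬ (3 ∣ n) →
      (({a : Fq n | a ≠ 0 ∧ (linKer (der f a)).ncard = 4}.ncard : ℝ)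
          = (11 * (2:ℝ) ^ ((n:ℝ) - 2) - 2) / 3 ∧
        ({a : Fq n | a ≠ 0 ∧ (linKer (der f a)).ncard = 16}.ncard : ℝ)
          = ((2:ℝ) ^ ((n:ℝ) - 2) - 1) / 3)) ∧
    ((3 ∣ n) →
      (({a : Fq n | a ≠ 0 ∧ (linKer (der f a)).ncard = 4}.ncard : ℝ)
          = (2/3) * ((2:ℝ) ^ (n:ℝ) - 1)
            + (1/2) * (wt (fun x : Fq n => tr (x ^ 7)) : ℝ) ∧
        ({a : Fq n | a ≠ 0 ∧ (linKer (der f a)).ncard = 16}.ncard : ℝ)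
          = (1/3) * ((2:ℝ) ^ (n:ℝ) - 1)
            - (1/2) * (wt (fun x : Fq n => tr (x ^ 7)) : ℝ))) := by
  obtain ⟨h1, h2, h3, h4⟩ := X7.main_nat n hn hev f hf
  have e2 : (2 : ℝ) ^ ((n : ℝ) - 2) = 2 ^ n / 4 := by
    rw [Real.rpow_sub (by norm_num), Real.rpow_natCast]; norm_num
  have e1 : (2 : ℝ) ^ (n : ℝ) = 2 ^ n := Real.rpow_natCast _ _
  rw [e2, e1]
  have h2' := congrArg (Nat.cast (R := ℝ)) h2
  have h3' := congrArg (Nat.cast (R := ℝ)) h3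
  push_cast at h2' h3'
  refine ⟨h1, fun h => ?_, fun _ => ⟨by linarith, by linarith⟩⟩
  have h4' := congrArg (Nat.cast (R := ℝ)) (h4 h)
  push_cast at h4'
  exact ⟨by linarith, by linarith⟩
end
end

section
/- Let n be an odd positive integer and let f : F → 𝔽₂ be defined by f(x) = tr(x^7). For every a ∈ F with a ≠ 0, the linear kernel E_{D_a f} has cardinality 2 or 8. Moreover: if 3 does not divide n, then |{a ∈ F, a ≠ 0 : |E_{D_a f}| = 2}| = 2^{n−1} and |{a ∈ F, a ≠ 0 : |E_{D_a f}| = 8}| = 2^{n−1} − 1; if 3 divides n, then |{a ∈ F, a ≠ 0 : |E_{D_a f}| = 2}| = wt(tr(x^7)) and |{a ∈ F, a ≠ 0 : |E_{D_a f}| = 8}| = 2^n − 1 − wt(tr(x^7)). -/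
noncomputable section

section Helpers

variable {n : ℕ}

lemma two_eq_zero' : (2 : Fq n) = 0 := CharP.cast_eq_zero (Fq n) 2

lemma tr_add (x y : Fq n) : tr (x + y) = tr x + tr y := by simp [tr]

lemma tr_zero' : tr (0 : Fq n) = 0 := by simp [tr]

lemma tr_sq (x : Fq n) : tr (x ^ 2) = tr x := by
  have h := Algebra.trace_eq_of_algEquiv
    (FiniteField.frobeniusAlgEquivOfAlgebraic (ZMod 2) (Fq n)) x
  simpa [tr] using h

lemma tr_pow4 (x : Fq n) : tr (x ^ 4) = tr x := by
  have : x ^ 4 = (x ^ 2) ^ 2 := by ring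
  rw [this, tr_sq, tr_sq]

lemma z2 (z : ZMod 2) : z = 0 ∨ z = 1 := by
  revert z; decide

lemma tr_one (hn : 0 < n) (hodd : Odd n) : tr (1 : Fq n) = 1 := by
  have h := Algebra.trace_algebraMap (R := ZMod 2) (S := Fq n) (1 : ZMod 2)
  rw [GaloisField.finrank 2 hn.ne'] at h
  rw [map_one] at h
  rw [tr, h]
  obtain ⟨k, rfl⟩ := hodd
  have : (2 : ZMod 2) = 0 := rfl
  simp [this]

lemma tr_nondeg (y : Fq n) (h : ∀ x : Fq n, tr (x * y) = 0) : y = 0 := by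
  apply (traceForm_nondegenerate (ZMod 2) (Fq n)).1 y
  intro x
  rw [Algebra.traceForm_apply, mul_comm]
  exact h x

lemma sq_add_self (u : Fq n) (h : u ^ 2 + u = 0) : u = 0 ∨ u = 1 := by
  have h2 := two_eq_zero' (n := n)
  have : u * (u - 1) = 0 := by linear_combination h - u * h2
  rcases mul_eq_zero.1 this with h | h
  · exact Or.inl h
  · exact Or.inr (sub_eq_zero.1 h)

def asMap (n : ℕ) : Fq n →+ Fq n where
  toFun u := u ^ 2 + u
  map_zero' := by simp
  map_add' x y := by linear_combination (x * y) * two_eq_zero' (n := n)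

def trHom (n : ℕ) : Fq n →+ ZMod 2 where
  toFun u := tr u
  map_zero' := tr_zero'
  map_add' x y := tr_add x y

lemma as_surj (hn : 0 < n) (hodd : Odd n) (v : Fq n) (hv : tr v = 0) :
    ∃ u : Fq n, u ^ 2 + u = v := by
  have hle : (asMap n).range ≤ (trHom n).ker := by
    rintro _ ⟨u, rfl⟩
    change tr (u ^ 2 + u) = 0
    rw [tr_add, tr_sq]
    exact CharTwo.add_self_eq_zero _
  have h1 := AddSubgroup.card_eq_card_quotient_mul_card_addSubgroup (asMap n).ker
  have h2 := AddSubgroup.card_eq_card_quotient_mul_card_addSubgroup (trHom n).ker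
  rw [Nat.card_congr (QuotientAddGroup.quotientKerEquivRange _).toEquiv] at h1 h2
  have hk : Nat.card (asMap n).ker ≤ 2 := by
    have : ((asMap n).ker : Set (Fq n)) ⊆ {0, 1} := fun u hu => sq_add_self u hu
    have h3 := Set.ncard_le_ncard this
    rw [Set.ncard_pair zero_ne_one] at h3
    exact h3
  have hr : Nat.card (trHom n).range = 2 := by
    have : (trHom n).range = ⊤ := by
      rw [AddMonoidHom.range_eq_top]
      intro z
      rcases z2 z with rfl | rfl
      · exact ⟨0, tr_zero'⟩
      · exact ⟨1, tr_one hn hodd⟩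
    rw [this]
    simp
  have heq : (asMap n).range = (trHom n).ker := by
    apply AddSubgroup.eq_of_le_of_card_ge hle
    rw [hr] at h2
    nlinarith [Nat.card_pos (α := (asMap n).range)]
  have : v ∈ (trHom n).ker := hv
  rw [← heq] at this
  exact this

lemma as4_surj (hn : 0 < n) (hodd : Odd n) (v : Fq n) (hv : tr v = 0) :
    ∃ r : Fq n, r ^ 4 + r = v := by
  have h2 := two_eq_zero' (n := n)
  obtain ⟨g, hg⟩ := as_surj hn hodd v hv
  obtain ⟨g, hg, hg0⟩ : ∃ g : Fq n, g ^ 2 + g = v ∧ tr g = 0 := by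
    rcases z2 (tr g) with h | h
    · exact ⟨g, hg, h⟩
    · refine ⟨g + 1, by linear_combination hg + (g + 1) * h2, ?_⟩
      rw [tr_add, h, tr_one hn hodd]; rfl
  obtain ⟨r, hr⟩ := as_surj hn hodd g hg0
  refine ⟨r, ?_⟩
  rw [← hg, ← hr]
  linear_combination (-r ^ 3 - r ^ 2) * h2

lemma tr_as (u : Fq n) : tr (u ^ 2 + u) = 0 := by
  rw [tr_add, tr_sq]
  exact CharTwo.add_self_eq_zero _

lemma cube_one (hn : 0 < n) (hodd : Odd n) (d : Fq n) (h : d ^ 3 = 1) : d = 1 := by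
  have h2 := two_eq_zero' (n := n)
  have : (d - 1) * (d ^ 2 + d + 1) = 0 := by linear_combination h
  rcases mul_eq_zero.1 this with h | h
  · exact sub_eq_zero.1 h
  · have h3 : d ^ 2 + d = 1 := by linear_combination h - h2
    have := tr_as d
    rw [h3, tr_one hn hodd] at this
    exact absurd this one_ne_zero

lemma cube_inj (hn : 0 < n) (hodd : Odd n) (x y : Fq n) (h : x ^ 3 = y ^ 3) : x = y := by
  by_cases hy : y = 0
  · subst hy
    simpa using h
  · have : (x / y) ^ 3 = 1 := by rw [div_pow, h, div_self (pow_ne_zero _ hy)]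
    have := cube_one hn hodd _ this
    exact (div_eq_one_iff_eq hy).1 this

lemma mem_linKer (f : Fq n → ZMod 2) (hf : ∀ x, f x = tr (x ^ 7)) (a b : Fq n) :
    b ∈ linKer (der f a) ↔
      a ^ 8 * b ^ 16 + a ^ 16 * b ^ 8 + a ^ 2 * b ^ 8 + a ^ 8 * b ^ 2 + a * b ^ 2 + a ^ 2 * b
        = 0 := by
  have h2 := two_eq_zero' (n := n)
  set E := a ^ 8 * b ^ 16 + a ^ 16 * b ^ 8 + a ^ 2 * b ^ 8 + a ^ 8 * b ^ 2 + a * b ^ 2 + a ^ 2 * b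
    with hE
  have key : ∀ x, der (der f a) b x = tr (x ^ 4 * E) + tr (a ^ 7 + b ^ 7 + (a + b) ^ 7) := by
    intro x
    have e1 : x ^ 7 + (x + a) ^ 7 + ((x + b) ^ 7 + (x + b + a) ^ 7) =
        x * (a ^ 2 * b ^ 4 + a ^ 4 * b ^ 2) + x ^ 2 * (a * b ^ 4 + a ^ 4 * b)
        + x ^ 4 * (a * b ^ 2 + a ^ 2 * b) + (a ^ 7 + b ^ 7 + (a + b) ^ 7) := by
      grind
    have e2 : x ^ 4 * E = (x * (a ^ 2 * b ^ 4 + a ^ 4 * b ^ 2)) ^ 4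
        + (x ^ 2 * (a * b ^ 4 + a ^ 4 * b)) ^ 2 + x ^ 4 * (a * b ^ 2 + a ^ 2 * b) := by
      rw [hE]; grind
    simp only [der, hf]
    rw [← tr_add, ← tr_add, ← tr_add, e1, e2]
    simp only [tr_add, tr_sq, tr_pow4]
  constructor
  · rintro ⟨c, hc⟩
    apply tr_nondeg
    intro x
    have h0 := hc 0
    obtain ⟨y, hy⟩ := (frobeniusEquiv (Fq n) 2).surjective x
    obtain ⟨w, hw⟩ := (frobeniusEquiv (Fq n) 2).surjective y
    have hx : x = w ^ 4 := by
      rw [← hy, ← hw]; simp only [frobeniusEquiv_apply, frobenius_def]; ring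
    have h1 := hc w
    rw [key] at h0 h1
    rw [hx]
    have h3 : tr ((0 : Fq n) ^ 4 * E) = 0 := by simp [tr_zero']
    rw [h3] at h0
    rw [← h0] at h1
    simpa using h1
  · intro h
    exact ⟨_, fun x => by rw [key, h, mul_zero, tr_zero', zero_add]⟩

/-- Main classification in terms of `v = u ^ 2 + u`. -/
lemma mem_linKer' (hn : 0 < n) (hodd : Odd n) (f : Fq n → ZMod 2)
    (hf : ∀ x, f x = tr (x ^ 7)) (a e u : Fq n) (hae : a * e ^ 3 = 1) :
    a * u ∈ linKer (der f a) ↔ (u ^ 2 + u = 0 ∨ u ^ 2 + u = e ^ 7 ∨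
      ∃ t, u ^ 2 + u = e ^ 7 * t ∧ t ^ 4 + t = (e ^ 7) ^ 2) := by
  have h2 := two_eq_zero' (n := n)
  rw [mem_linKer f hf]
  have ha : a ≠ 0 := by rintro rfl; simp at hae
  have he : e ≠ 0 := by rintro rfl; simp at hae
  obtain ⟨v, hv⟩ : ∃ v, v = u ^ 2 + u := ⟨_, rfl⟩
  obtain ⟨s, hs⟩ : ∃ s, s = e ^ 7 := ⟨_, rfl⟩
  have hs0 : s ≠ 0 := by rw [hs]; exact pow_ne_zero _ he
  have hc : a ^ 7 * s ^ 3 = 1 := by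
    rw [hs]
    calc a ^ 7 * (e ^ 7) ^ 3 = (a * e ^ 3) ^ 7 := by ring
      _ = 1 := by rw [hae, one_pow]
  have e1 : a ^ 8 * (a * u) ^ 16 + a ^ 16 * (a * u) ^ 8 + a ^ 2 * (a * u) ^ 8
      + a ^ 8 * (a * u) ^ 2 + a * (a * u) ^ 2 + a ^ 2 * (a * u)
      = a ^ 3 * ((a ^ 7 * v ^ 4 + v) * (a ^ 7 * (a ^ 7 * v ^ 4 + v) + 1)) := by
    have e4 : v ^ 4 = u ^ 8 + u ^ 4 := by rw [hv]; grind
    have e5 : (a ^ 7 * v ^ 4 + v) ^ 2 = a ^ 14 * (u ^ 16 + u ^ 8) + u ^ 4 + u ^ 2 := by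
      rw [e4, hv]; grind
    have e6 : (a ^ 7 * v ^ 4 + v) * (a ^ 7 * (a ^ 7 * v ^ 4 + v) + 1)
      = a ^ 7 * (a ^ 7 * v ^ 4 + v) ^ 2 + (a ^ 7 * v ^ 4 + v) := by ring
    rw [e6, e5, e4, hv]
    linear_combination (-a ^ 10 * u ^ 4) * h2
  rw [e1, ← hs, ← hv, mul_eq_zero, mul_eq_zero, or_iff_right (pow_ne_zero 3 ha)]
  generalize a ^ 7 = c at *
  constructor
  · rintro (h | h)
    · by_cases hv0 : v = 0
      · exact Or.inl hv0
      · right; left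
        apply cube_inj hn hodd
        apply mul_left_cancel₀ hv0
        linear_combination s ^ 3 * h - v ^ 4 * hc - v * s ^ 3 * h2
    · right; right
      refine ⟨v / s, by field_simp, ?_⟩
      have : v ^ 4 + s ^ 3 * v = s ^ 6 := by
        linear_combination s ^ 6 * h - (v ^ 4 * (c * s ^ 3 + 1) + v * s ^ 3) * hc - s ^ 6 * h2
      field_simp
      linear_combination this
  · rintro (h | h | ⟨t, h, ht⟩)
    · left; rw [h]; ring
    · left; rw [h]; linear_combination s * hc + s * h2
    · right; rw [h]
      apply mul_left_cancel₀ (pow_ne_zero 2 hs0)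
      linear_combination ((c * s ^ 3 + 1) * t ^ 4 + t) * hc + ht + s ^ 2 * h2

lemma card_two (hn : 0 < n) (hodd : Odd n) (f : Fq n → ZMod 2)
    (hf : ∀ x, f x = tr (x ^ 7)) (a e : Fq n) (hae : a * e ^ 3 = 1) (ht : tr (e ^ 7) = 1) :
    (linKer (der f a)).ncard = 2 := by
  have ha : a ≠ 0 := by rintro rfl; simp at hae
  have : linKer (der f a) = {0, a} := by
    ext b
    obtain ⟨u, rfl⟩ : ∃ u, b = a * u := ⟨b / a, by field_simp⟩
    rw [mem_linKer' hn hodd f hf a e u hae]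
    constructor
    · rintro (h | h | ⟨t, h, h'⟩)
      · rcases sq_add_self u h with rfl | rfl <;> simp
      · have := tr_as u
        rw [h, ht] at this
        exact absurd this one_ne_zero
      · exfalso
        have h1 := congrArg tr h'
        rw [tr_sq, ht, tr_add, tr_pow4, CharTwo.add_self_eq_zero] at h1
        exact absurd h1.symm one_ne_zero
    · rintro (h | h)
      · left
        have : u = 0 := by simpa [ha] using h
        rw [this]; ring
      · left
        have : u = 1 := by
          have h : a * u = a := h
          simpa [ha] using h
        rw [this]; linear_combination two_eq_zero' (n := n)
  rw [this, Set.ncard_pair ha.symm]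

lemma card_eight (hn : 0 < n) (hodd : Odd n) (f : Fq n → ZMod 2)
    (hf : ∀ x, f x = tr (x ^ 7)) (a e : Fq n) (hae : a * e ^ 3 = 1) (ht : tr (e ^ 7) = 0) :
    (linKer (der f a)).ncard = 8 := by
  classical
  have h2 := two_eq_zero' (n := n)
  have ha : a ≠ 0 := by rintro rfl; simp at hae
  have he : e ≠ 0 := by rintro rfl; simp at hae
  obtain ⟨s, hs⟩ : ∃ s, s = e ^ 7 := ⟨_, rfl⟩
  have hs0 : s ≠ 0 := by rw [hs]; exact pow_ne_zero _ he
  obtain ⟨r, hr⟩ := as4_surj hn hodd _ ht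
  rw [← hs] at hr
  obtain ⟨p, hp⟩ : ∃ p, p = r ^ 2 + r := ⟨_, rfl⟩
  obtain ⟨q, hq⟩ : ∃ q, q = r ^ 3 := ⟨_, rfl⟩
  have hps : p ^ 2 + p = s := by rw [hp, ← hr]; linear_combination (r ^ 3 + r ^ 2) * h2
  have hqs : q ^ 2 + q = s * r ^ 2 := by rw [hq, ← hr]; ring
  have hfour : ∀ d : Fq n, d ^ 4 + d = 0 → d = 0 ∨ d = 1 := by
    intro d hd
    have : d * (d ^ 3 - 1) = 0 := by linear_combination hd - d * h2
    rcases mul_eq_zero.1 this with h | h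
    · exact Or.inl h
    · exact Or.inr (cube_one hn hodd d (sub_eq_zero.1 h))
  have hr0 : r ≠ 0 := by rintro rfl; apply hs0; rw [← hr]; ring
  have hr1 : r ≠ 1 := by rintro rfl; apply hs0; rw [← hr]; linear_combination h2
  have p0 : p ≠ 0 := by intro h; apply hs0; rw [← hps, h]; ring
  have p1 : p ≠ 1 := by intro h; apply hs0; rw [← hps, h]; linear_combination h2
  have q0 : q ≠ 0 := by rw [hq]; exact pow_ne_zero _ hr0
  have q1 : q ≠ 1 := by intro h; exact hr1 (cube_one hn hodd r (hq ▸ h))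
  have pq0 : q ≠ p := by
    intro h
    apply hs0
    have h3 : r ^ 2 = r + 1 := by
      apply mul_left_cancel₀ hr0
      linear_combination h - hq + hp
    rw [← hr]
    linear_combination (r ^ 2 + r + 2) * h3 + (2 * r + 1) * h2
  have pq1 : q ≠ p + 1 := by
    intro h
    have : (r - 1) ^ 3 = 0 := by
      linear_combination h - hq + hp - (r ^ 2 - 2 * r) * h2
    exact hr1 (sub_eq_zero.1 (pow_eq_zero_iff (by norm_num) |>.1 this))
  have asinj : ∀ u w : Fq n, u ^ 2 + u = w ^ 2 + w → u = w ∨ u = w + 1 := by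
    intro u w h
    rcases sq_add_self (u - w) (by linear_combination h + (w ^ 2 - u * w) * h2) with h | h
    · exact Or.inl (sub_eq_zero.1 h)
    · exact Or.inr (by linear_combination h)
  have hset : linKer (der f a) = (fun u => a * u) ''
      (({0, 1, p, p + 1, q, q + 1, q + p, q + p + 1} : Finset (Fq n)) : Set (Fq n)) := by
    ext b
    obtain ⟨u, rfl⟩ : ∃ u, b = a * u := ⟨b / a, by field_simp⟩
    rw [mem_linKer' hn hodd f hf a e u hae, ← hs,
      (mul_right_injective₀ ha).mem_set_image]
    simp only [Finset.coe_insert, Finset.coe_singleton, Set.mem_insert_iff, Set.mem_singleton_iff]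
    constructor
    · rintro (h | h | ⟨t, h, h'⟩)
      · rcases sq_add_self u h with h | h <;> simp [h]
      · rcases asinj u p (by rw [h, hps]) with h | h <;> simp [h]
      · have : t = r ^ 2 ∨ t = r ^ 2 + 1 := by
          rcases hfour (t - r ^ 2) (by rw [← hr] at h'; grind) with h | h
          · exact Or.inl (sub_eq_zero.1 h)
          · exact Or.inr (by linear_combination h)
        rcases this with rfl | rfl
        · rcases asinj u q (by rw [h, hqs]) with h | h <;> simp [h]
        · rcases asinj u (q + p) (by linear_combination h - hqs - hps - q * p * h2) with h | h <;>
            simp [h]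
    · have hrs : (r ^ 2) ^ 4 + r ^ 2 = s ^ 2 := by
        rw [← hr]; linear_combination (-r ^ 5) * h2
      have hrs1 : (r ^ 2 + 1) ^ 4 + (r ^ 2 + 1) = s ^ 2 := by
        rw [← hrs]; grind
      rintro (rfl | rfl | rfl | rfl | rfl | rfl | rfl | rfl)
      · left; ring
      · left; linear_combination h2
      · right; left; exact hps
      · right; left; linear_combination hps + (p + 1) * h2
      · right; right; exact ⟨_, hqs, hrs⟩
      · right; right; exact ⟨_, by linear_combination hqs + (q + 1) * h2, hrs⟩
      · right; right; exact ⟨_, by linear_combination hqs + hps + q * p * h2, hrs1⟩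
      · right; right
        exact ⟨_, by linear_combination hqs + hps + (q * p + q + p + 1) * h2, hrs1⟩
  rw [hset, Set.ncard_image_of_injective _ (mul_right_injective₀ ha), Set.ncard_coe_finset]
  clear hset asinj hfour
  clear hps hqs hr hq hp
  repeat rw [Finset.card_insert_of_notMem]
  · simp
  all_goals
    simp only [Finset.mem_insert, Finset.mem_singleton]
    grind

lemma wt_eq (hn : 0 < n) (hodd : Odd n) (h3 : ¬ 3 ∣ n) :
    wt (fun x : Fq n => tr (x ^ 7)) = 2 ^ (n - 1) := by
  have hcard : Nat.card (Fq n) = 2 ^ n := GaloisField.card 2 n hn.ne'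
  have hinj : Function.Injective (fun x : Fq n => x ^ 7) := by
    intro x y h
    change x ^ 7 = y ^ 7 at h
    by_cases hy : y = 0
    · subst hy
      simpa using h
    · have h7 : (x / y) ^ 7 = 1 := by rw [div_pow, h, div_self (pow_ne_zero _ hy)]
      have hne : x / y ≠ 0 := by intro h0; rw [h0] at h7; simp at h7
      have hq : (x / y) ^ (2 ^ n - 1) = 1 := by
        letI := Fintype.ofFinite (Fq n)
        rw [← hcard, Nat.card_eq_fintype_card]
        exact FiniteField.pow_card_sub_one_eq_one _ hne
      have hg : Nat.gcd 7 (2 ^ n - 1) = 1 := by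
        have := Nat.pow_sub_one_gcd_pow_sub_one 2 3 n
        rw [(Nat.Prime.coprime_iff_not_dvd Nat.prime_three).2 h3] at this
        simpa using this
      have := orderOf_dvd_of_pow_eq_one h7
      have h1 := Nat.dvd_gcd this (orderOf_dvd_of_pow_eq_one hq)
      rw [hg, Nat.dvd_one, orderOf_eq_one_iff] at h1
      exact (div_eq_one_iff_eq hy).1 h1
  have hbij := Finite.injective_iff_bijective.1 hinj
  have e1 : {x : Fq n | tr x = 1} = (fun x : Fq n => x ^ 7) '' {x | tr (x ^ 7) = 1} := by
    ext y
    obtain ⟨x, rfl⟩ := hbij.2 y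
    rw [hinj.mem_set_image]; rfl
  have e2 : {x : Fq n | tr x = 0} = (fun x : Fq n => x + 1) '' {x | tr x = 1} := by
    ext y
    obtain ⟨x, rfl⟩ : ∃ x, y = x + 1 := ⟨y - 1, by ring⟩
    rw [(add_left_injective (1 : Fq n)).mem_set_image]
    simp only [Set.mem_setOf_eq, tr_add, tr_one hn hodd]
    generalize tr x = z
    revert z; decide
  have e3 : {x : Fq n | tr x = 1}.ncard + {x : Fq n | tr x = 0}.ncard = 2 ^ n := by
    rw [← hcard, ← Set.ncard_univ, ← Set.ncard_union_eq]
    · congr 1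
      ext x
      simpa using (z2 (tr x)).symm
    · rw [Set.disjoint_left]
      intro x h h'
      simp only [Set.mem_setOf_eq] at h h'
      rw [h] at h'
      exact absurd h' one_ne_zero
  rw [e2, Set.ncard_image_of_injective _ (add_left_injective (1 : Fq n)), e1,
    Set.ncard_image_of_injective _ hinj] at e3
  rw [wt]
  obtain ⟨m, rfl⟩ : ∃ m, n = m + 1 := ⟨n - 1, by omega⟩
  rw [pow_succ] at e3
  simp only [Nat.add_sub_cancel]
  omega

end Helpers

/-- Distribution of linear-kernel sizes of derivatives of `tr(x^7)`, odd `n`. -/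
theorem linKer_card_der_tr_x7_odd (n : ℕ) (hn : 0 < n) (hodd : Odd n)
    (f : Fq n → ZMod 2) (hf : ∀ x, f x = tr (x ^ 7)) :
    (∀ a : Fq n, a ≠ 0 →
      (linKer (der f a)).ncard = 2 ∨ (linKer (der f a)).ncard = 8) ∧
    (¬ (3 ∣ n) →
      ({a : Fq n | a ≠ 0 ∧ (linKer (der f a)).ncard = 2}.ncard = 2 ^ (n - 1) ∧
       {a : Fq n | a ≠ 0 ∧ (linKer (der f a)).ncard = 8}.ncard = 2 ^ (n - 1) - 1)) ∧
    ((3 ∣ n) →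
      ({a : Fq n | a ≠ 0 ∧ (linKer (der f a)).ncard = 2}.ncard
          = wt (fun x : Fq n => tr (x ^ 7)) ∧
       {a : Fq n | a ≠ 0 ∧ (linKer (der f a)).ncard = 8}.ncard
          = 2 ^ n - 1 - wt (fun x : Fq n => tr (x ^ 7)))) := by
  have hex : ∀ a : Fq n, a ≠ 0 → ∃ e : Fq n, a * e ^ 3 = 1 := by
    intro a ha
    have hinj : Function.Injective (fun x : Fq n => x ^ 3) :=
      fun x y h => cube_inj hn hodd x y h
    obtain ⟨e, he⟩ := (Finite.injective_iff_bijective.1 hinj).2 a⁻¹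
    exact ⟨e, by rw [show e ^ 3 = a⁻¹ from he, mul_inv_cancel₀ ha]⟩
  have h1 : ∀ a : Fq n, a ≠ 0 →
      (linKer (der f a)).ncard = 2 ∨ (linKer (der f a)).ncard = 8 := by
    intro a ha
    obtain ⟨e, he⟩ := hex a ha
    rcases z2 (tr (e ^ 7)) with h | h
    · exact Or.inr (card_eight hn hodd f hf a e he h)
    · exact Or.inl (card_two hn hodd f hf a e he h)
  have hA : {a : Fq n | a ≠ 0 ∧ (linKer (der f a)).ncard = 2}.ncard
      = wt (fun x : Fq n => tr (x ^ 7)) := by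
    have hinj : Function.Injective (fun x : Fq n => (x ^ 3)⁻¹) :=
      fun x y h => cube_inj hn hodd x y (inv_injective h)
    have : {a : Fq n | a ≠ 0 ∧ (linKer (der f a)).ncard = 2}
        = (fun x : Fq n => (x ^ 3)⁻¹) '' {x | tr (x ^ 7) = 1} := by
      ext a
      constructor
      · rintro ⟨ha, hc⟩
        obtain ⟨e, he⟩ := hex a ha
        refine ⟨e, ?_, (eq_inv_of_mul_eq_one_left he).symm⟩
        rcases z2 (tr (e ^ 7)) with h | h
        · rw [card_eight hn hodd f hf a e he h] at hc
          omega
        · exact h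
      · rintro ⟨e, he, rfl⟩
        have he0 : e ≠ 0 := by
          rintro rfl
          simp [tr_zero'] at he
        have h3 := pow_ne_zero 3 he0
        exact ⟨inv_ne_zero h3, card_two hn hodd f hf _ e (inv_mul_cancel₀ h3) he⟩
    rw [this, Set.ncard_image_of_injective _ hinj, wt]
  have hB : {a : Fq n | a ≠ 0 ∧ (linKer (der f a)).ncard = 8}.ncard
      = 2 ^ n - 1 - wt (fun x : Fq n => tr (x ^ 7)) := by
    have hcard : Nat.card (Fq n) = 2 ^ n := GaloisField.card 2 n hn.ne'
    have hsum : {a : Fq n | a ≠ 0 ∧ (linKer (der f a)).ncard = 2}.ncard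
        + {a : Fq n | a ≠ 0 ∧ (linKer (der f a)).ncard = 8}.ncard = 2 ^ n - 1 := by
      rw [← hcard, ← Set.ncard_singleton (0 : Fq n), ← Set.ncard_compl, ← Set.ncard_union_eq]
      · congr 1
        ext a
        simp only [Set.mem_union, Set.mem_setOf_eq, Set.mem_compl_iff, Set.mem_singleton_iff]
        constructor
        · rintro (h | h) <;> exact h.1
        · intro h
          rcases h1 a h with h' | h'
          · exact Or.inl ⟨h, h'⟩
          · exact Or.inr ⟨h, h'⟩
      · rw [Set.disjoint_left]
        rintro x ⟨_, h⟩ ⟨_, h'⟩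
        omega
    rw [hA] at hsum
    omega
  refine ⟨h1, fun h3 => ⟨by rw [hA, wt_eq hn hodd h3], ?_⟩, fun _ => ⟨hA, hB⟩⟩
  rw [hB, wt_eq hn hodd h3]
  obtain ⟨m, rfl⟩ : ∃ m, n = m + 1 := ⟨n - 1, by omega⟩
  rw [pow_succ]
  simp only [Nat.add_sub_cancel]
  omega
end
end

section
/- Let d ≥ 1 be an odd integer. Then wt(tr(x^d)) ≥ 2^{n−1} − ((d−1)/2)·2^{n/2}, i.e., the number of x ∈ F with tr(x^d) = 1 is at least 2^{n−1} − ((d−1)/2)·2^{n/2}. -/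
noncomputable section

open Finset in
/-- Second-moment (Cauchy-Schwarz) proof of the Weil bound for monomials. -/
theorem weil_monomial {F : Type*} [Field F] [Fintype F] [DecidableEq F] [CharP F 2]
    (ψ : AddChar F ℝ) (hψ : ψ.IsPrimitive) (d : ℕ) (hd : 1 ≤ d) :
    (∑ x : F, ψ (x ^ d)) ^ 2 ≤ (((d:ℝ) - 1)) ^ 2 * (Fintype.card F : ℝ) := by
  have hd0 : d ≠ 0 := by omega
  set q : ℝ := (Fintype.card F : ℝ) with hq
  have hq1 : 1 < q := by
    have := Fintype.one_lt_card (α := F)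
    rw [hq]; exact_mod_cast this
  set S : F → ℝ := fun a => ∑ x : F, ψ (a * x ^ d) with hS
  set e : ℝ := ∑ u : F, if u ^ d = 1 then (1:ℝ) else 0 with he
  have orth : ∀ b : F, ∑ a : F, ψ (a * b) = if b = 0 then q else 0 := by
    intro b
    rw [AddChar.sum_mulShift b hψ]
    split_ifs <;> simp [hq]
  have hS0 : S 0 = q := by simp [hS, hq]
  have hsumS : ∑ a, S a = q := by
    simp only [hS]
    rw [sum_comm]
    simp [orth, hd0]
  have hfib : ∀ x : F, x ≠ 0 → ∑ y : F, (if x ^ d = y ^ d then (1:ℝ) else 0) = e := by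
    intro x hx
    rw [he, ← Equiv.sum_comp (Equiv.mulLeft₀ x hx)]
    refine sum_congr rfl fun u _ => ?_
    have : x ^ d ≠ 0 := pow_ne_zero _ hx
    change (if x ^ d = (x * u) ^ d then (1:ℝ) else 0) = _
    rw [mul_pow]
    congr 1
    simp only [eq_iff_iff]
    constructor
    · intro h
      exact (mul_left_cancel₀ this (by rw [mul_one]; exact h)).symm
    · intro h; simp [h]
  have hN : ∑ x : F, ∑ y : F, (if x ^ d = y ^ d then (1:ℝ) else 0) = 1 + (q - 1) * e := by
    rw [← add_sum_erase univ _ (mem_univ (0:F))]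
    rw [sum_congr rfl (fun x hx => hfib x (ne_of_mem_erase hx))]
    have hc : ((univ.erase (0:F)).card : ℝ) = q - 1 := by
      rw [card_erase_of_mem (mem_univ _), Nat.cast_sub (by simp [Fintype.card_pos, Nat.one_le_iff_ne_zero])]
      simp [hq]
    have h0 : ∑ y : F, (if (0:F) ^ d = y ^ d then (1:ℝ) else 0) = 1 := by
      have : ∀ y : F, ((0:F) ^ d = y ^ d) ↔ y = 0 := by
        intro y; rw [zero_pow hd0, eq_comm, pow_eq_zero_iff hd0]
      simp [this]
    rw [h0, sum_const, nsmul_eq_mul, hc]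
  have hS2 : ∑ a, S a ^ 2 = q * (1 + (q - 1) * e) := by
    rw [← hN, mul_sum]
    have : ∀ a, S a ^ 2 = ∑ x : F, ∑ y : F, ψ (a * (x ^ d + y ^ d)) := by
      intro a
      simp only [hS]
      rw [sq, sum_mul_sum]
      simp [mul_add, AddChar.map_add_eq_mul]
    simp only [this]
    rw [sum_comm]
    refine sum_congr rfl fun x _ => ?_
    rw [sum_comm, mul_sum]
    refine sum_congr rfl fun y _ => ?_
    rw [orth]
    simp only [CharTwo.add_eq_zero, mul_ite, mul_one, mul_zero]
  -- representation counts
  set r : F → ℝ := fun a => ∑ c : F, if c ^ d = a then (1:ℝ) else 0 with hr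
  have hrsum : ∀ g : F → ℝ, ∑ a, r a * g a = ∑ c : F, g (c ^ d) := by
    intro g
    simp only [hr, sum_mul]
    rw [sum_comm]
    simp
  have hr0 : r 0 = 1 := by
    simp only [hr, pow_eq_zero_iff hd0]
    rw [sum_ite_eq' univ (0:F) (fun _ => (1:ℝ))]
    simp
  have hr1 : ∑ a, r a = q := by
    have := hrsum (fun _ => 1)
    simpa [hq] using this
  have hr2 : ∑ a, r a ^ 2 = 1 + (q - 1) * e := by
    have := hrsum r
    rw [← hN]
    simp only [sq, this]
    simp only [hr]
    exact sum_congr rfl fun x _ => sum_congr rfl fun y _ => by simp [eq_comm]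
  have hSinv : ∀ c : F, c ≠ 0 → S (c ^ d) = S 1 := by
    intro c hc
    simp only [hS]
    rw [← Equiv.sum_comp (Equiv.mulLeft₀ c hc) (fun x => ψ (1 * x ^ d))]
    simp [mul_pow]
  have hrS : ∑ a, r a * S a = q + (q - 1) * S 1 := by
    rw [hrsum, ← add_sum_erase univ _ (mem_univ (0:F))]
    rw [sum_congr rfl (fun x hx => hSinv x (ne_of_mem_erase hx))]
    rw [sum_const, nsmul_eq_mul, card_erase_of_mem (mem_univ _),
      Nat.cast_sub (by simp [Fintype.card_pos, Nat.one_le_iff_ne_zero])]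
    rw [zero_pow hd0, hS0]
    simp [hq]
  have hcs := sum_mul_sq_le_sq_mul_sq (univ.erase (0:F)) (fun a => r a - 1) S
  have e1 : ∑ a ∈ univ.erase (0:F), (r a - 1) * S a = (q - 1) * S 1 := by
    have := add_sum_erase univ (fun a => (r a - 1) * S a) (mem_univ (0:F))
    have h2 : ∑ a, (r a - 1) * S a = q + (q - 1) * S 1 - q := by
      rw [← hrS]
      conv_rhs => rw [← hsumS]
      rw [← sum_sub_distrib]
      exact sum_congr rfl fun a _ => by ring
    simp only [hr0] at this
    linarith
  have e2 : ∑ a ∈ univ.erase (0:F), (r a - 1) ^ 2 = (q - 1) * (e - 1) := by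
    have := add_sum_erase univ (fun a => (r a - 1) ^ 2) (mem_univ (0:F))
    have h2 : ∑ a, (r a - 1) ^ 2 = 1 + (q - 1) * e - 2 * q + q := by
      rw [← hr2]
      have h3 : q = ∑ a : F, (1:ℝ) := by simp [hq]
      nth_rw 1 [← hr1]
      rw [h3, mul_sum, ← sum_sub_distrib, ← sum_add_distrib]
      exact sum_congr rfl fun a _ => by ring
    simp only [hr0] at this
    linarith
  have e3 : ∑ a ∈ univ.erase (0:F), S a ^ 2 = q * (q - 1) * (e - 1) := by
    have := add_sum_erase univ (fun a => S a ^ 2) (mem_univ (0:F))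
    simp only [hS0, hS2] at this
    linarith
  rw [e1, e2, e3] at hcs
  have he' : e = ((univ.filter (fun u : F => u ^ d = 1)).card : ℝ) := by
    simp [he]
  have he1 : 1 ≤ e := by
    rw [he']
    have : 0 < (univ.filter (fun u : F => u ^ d = 1)).card :=
      card_pos.2 ⟨1, by simp⟩
    exact_mod_cast this
  have hed : e ≤ d := by
    rw [he']
    have h1 : (univ.filter (fun u : F => u ^ d = 1)) ⊆ (Polynomial.nthRoots d (1:F)).toFinset := by
      intro u hu
      simp only [mem_filter, mem_univ, true_and] at hu
      simp [Polynomial.mem_nthRoots (show 0 < d by omega), hu]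
    have := (card_le_card h1).trans ((Multiset.toFinset_card_le _).trans
      (Polynomial.card_nthRoots d (1:F)))
    exact_mod_cast this
  have hS1 : ∑ x : F, ψ (x ^ d) = S 1 := by simp [hS]
  rw [hS1]
  have hpos : 0 < (q - 1) ^ 2 := by nlinarith
  have h4 : S 1 ^ 2 ≤ (e - 1) ^ 2 * q := by
    refine le_of_mul_le_mul_left ?_ hpos
    linarith
  refine h4.trans ?_
  gcongr

/-- The sign character of `ZMod 2`. -/
def signChar : AddChar (ZMod 2) ℝ where
  toFun t := if t = 1 then -1 else 1
  map_zero_eq_one' := by simp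
  map_add_eq_mul' := by
    intro a b
    have h : (1 : ZMod 2) + 1 = 0 := by decide
    have h2 : ∀ t : ZMod 2, t = 0 ∨ t = 1 := by decide
    rcases h2 a with rfl | rfl <;> rcases h2 b with rfl | rfl <;> simp [h]

/-- Weil-bound consequence: lower bound on the weight of `tr(x^d)` for odd `d`. -/
theorem wt_tr_pow_ge (n : ℕ) (hn : 0 < n) (d : ℕ) (hd : 1 ≤ d) (hodd : Odd d) :
    (wt (fun x : Fq n => tr (x ^ d)) : ℝ)
      ≥ (2:ℝ) ^ ((n:ℝ) - 1) - (((d:ℝ) - 1) / 2) * (2:ℝ) ^ ((n:ℝ) / 2) := by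
  classical
  have : Fintype (Fq n) := Fintype.ofFinite _
  have hcard : (Fintype.card (Fq n) : ℝ) = 2 ^ n := by
    have := GaloisField.card 2 n hn.ne'
    rw [Nat.card_eq_fintype_card] at this
    exact_mod_cast this
  let ψ : AddChar (Fq n) ℝ :=
    signChar.compAddMonoidHom (Algebra.trace (ZMod 2) (Fq n)).toAddMonoidHom
  have hψv : ∀ x : Fq n, ψ x = if tr x = 1 then -1 else 1 := fun x => rfl
  have hψ : ψ.IsPrimitive := by
    apply AddChar.IsPrimitive.of_ne_one
    intro h
    obtain ⟨x, hx⟩ := Algebra.trace_surjective (ZMod 2) (Fq n) 1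
    have h1 := hψv x
    have hx' : tr x = 1 := hx
    rw [h, if_pos hx'] at h1
    norm_num at h1
  have key := weil_monomial ψ hψ d hd
  have hsum : ∑ x : Fq n, ψ (x ^ d) = 2 ^ n - 2 * (wt (fun x : Fq n => tr (x ^ d)) : ℝ) := by
    have hw : (wt (fun x : Fq n => tr (x ^ d)) : ℝ)
        = ∑ x : Fq n, if tr (x ^ d) = 1 then (1:ℝ) else 0 := by
      unfold wt
      rw [Set.ncard_eq_toFinset_card']
      simp
    rw [hw, ← hcard, Finset.mul_sum]
    have h3 : (Fintype.card (Fq n) : ℝ) = ∑ a : Fq n, (1:ℝ) := by simp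
    rw [h3, ← Finset.sum_sub_distrib]
    refine Finset.sum_congr rfl fun x _ => ?_
    rw [hψv]
    split_ifs <;> norm_num
  rw [hsum, hcard] at key
  have hsq : ((2:ℝ) ^ ((n:ℝ) / 2)) ^ 2 = 2 ^ n := by
    rw [← Real.rpow_natCast, ← Real.rpow_mul (by norm_num), ← Real.rpow_natCast]
    congr 1
    push_cast
    ring
  have hm : (2:ℝ) ^ ((n:ℝ) - 1) = 2 ^ n / 2 := by
    rw [Real.rpow_sub (by norm_num), Real.rpow_natCast, Real.rpow_one]
  have hd1 : (0:ℝ) ≤ (d:ℝ) - 1 := by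
    have : (1:ℝ) ≤ d := by exact_mod_cast hd
    linarith
  have hp : (0:ℝ) ≤ (2:ℝ) ^ ((n:ℝ) / 2) := by positivity
  rw [← hsq, ← mul_pow] at key
  have := abs_le_of_sq_le_sq' key (mul_nonneg hd1 hp)
  rw [hm, ← hsq]
  linarith [this.2]
end
end

section
/- Let r be an odd positive integer, n = 2r, f : F → 𝔽₂ defined by f(x) = tr(x^{2^r + 3}), and let K = {x ∈ F : x^{2^r} = x} be the subfield of F with 2^r elements. For every a ∈ F with a ≠ 0: if a ∈ K, then the linear kernel E_{D_a f} has cardinality 2^{r+1}; if a ∉ K, then E_{D_a f} has cardinality 4. -/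
noncomputable section

theorem aux_char {n : ℕ} (x : Fq n) : x + x = 0 := CharTwo.add_self_eq_zero x

theorem aux_tr_sq {n : ℕ} (x : Fq n) : tr (x ^ 2) = tr x := by
  have h := Algebra.trace_eq_of_algEquiv (FiniteField.frobeniusAlgEquiv (ZMod 2) (Fq n) 2) x
  simpa [tr, FiniteField.frobeniusAlgEquiv_apply] using h

theorem aux_tr_pow {n : ℕ} (x : Fq n) (k : ℕ) : tr (x ^ 2 ^ k) = tr x := by
  induction k with
  | zero => simp
  | succ k ih => rw [pow_succ, pow_mul, aux_tr_sq, ih]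

theorem aux_tr_add {n : ℕ} (x y : Fq n) : tr (x + y) = tr x + tr y := by simp [tr]

theorem aux_sq_surj {n : ℕ} (y : Fq n) : ∃ x : Fq n, x ^ 2 = y := by
  obtain ⟨x, hx⟩ := (FiniteField.frobeniusAlgEquiv (ZMod 2) (Fq n) 2).surjective y
  exact ⟨x, by simpa [FiniteField.frobeniusAlgEquiv_apply] using hx⟩

theorem aux_invol (r n : ℕ) (hr : 0 < r) (hn : n = 2 * r) (x : Fq n) :
    (x ^ 2 ^ r) ^ 2 ^ r = x := by
  have hc : Nat.card (Fq n) = 2 ^ n := GaloisField.card 2 n (by omega)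
  have : x ^ Nat.card (Fq n) = x := by
    have := Fintype.ofFinite (Fq n)
    rw [Nat.card_eq_fintype_card]; exact FiniteField.pow_card x
  have e : 2 ^ n = 2 ^ r * 2 ^ r := by rw [hn, two_mul, pow_add]
  rw [hc, e, pow_mul] at this
  exact this

/-- Conjugation is additive. -/
theorem aux_sadd {n : ℕ} (r : ℕ) (x y : Fq n) : (x + y) ^ 2 ^ r = x ^ 2 ^ r + y ^ 2 ^ r :=
  add_pow_char_pow x y 2 r

theorem aux_mem (r n : ℕ) (hr : 0 < r) (hn : n = 2 * r)
    (f : Fq n → ZMod 2) (hf : ∀ x, f x = tr (x ^ (2 ^ r + 3))) (a b : Fq n) :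
    b ∈ linKer (der f a) ↔
      (a ^ 2 ^ r * (b + b ^ 2 ^ r) ^ 2 + b ^ 2 ^ r * (a + a ^ 2 ^ r) ^ 2) ^ 2
        = a ^ 2 ^ r * b + b ^ 2 ^ r * a := by
  set A := a ^ 2 ^ r with hA
  set B := b ^ 2 ^ r with hB
  set M := (A * (b + B) ^ 2 + B * (a + A) ^ 2) ^ 2 + (A * b + B * a) with hM
  have two : (2 : Fq n) = 0 := CharTwo.two_eq_zero
  have key : ∀ x, der (der f a) b x = der (der f a) b 0 + tr (x ^ 2 * M) := by
    intro x
    have e0 : tr (x ^ 2 * M) = tr (x ^ 2 * (A * b + B * a)) + tr (x * (A * b ^ 2 + B * a ^ 2))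
        + tr (x ^ 2 ^ r * (a * b ^ 2 + a ^ 2 * b)) := by
      have h1 : tr (x ^ 2 ^ r * (a * b ^ 2 + a ^ 2 * b)) = tr (x * (A * B ^ 2 + A ^ 2 * B)) := by
        rw [← aux_tr_pow _ r]
        congr 1
        rw [mul_pow, aux_invol r n hr hn, aux_sadd, mul_pow, mul_pow, hA, hB,
          pow_right_comm a 2, pow_right_comm b 2]
      rw [h1, ← aux_tr_sq (x * (A * b ^ 2 + B * a ^ 2)), ← aux_tr_sq (x * (A * B ^ 2 + A ^ 2 * B)),
        ← aux_tr_add, ← aux_tr_add]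
      congr 1
      rw [hM]
      grind
    simp only [der, hf, ← aux_tr_add, e0]
    congr 1
    simp only [pow_add, aux_sadd, ← hA, ← hB]
    have z : (0 : Fq n) ^ 2 ^ r = 0 := by simp
    rw [z]
    generalize x ^ 2 ^ r = X
    grind
  have hiff : b ∈ linKer (der f a) ↔ M = 0 := by
    constructor
    · rintro ⟨c, hc⟩
      by_contra hM0
      have hz : ∀ x, tr (x ^ 2 * M) = 0 := by
        intro x
        have := key x
        rw [hc, hc] at this
        simpa using this
      obtain ⟨y, hy⟩ := Algebra.trace_surjective (ZMod 2) (Fq n) 1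
      obtain ⟨x, hx⟩ := aux_sq_surj (y * M⁻¹)
      have := hz x
      rw [hx, mul_assoc, inv_mul_cancel₀ hM0, mul_one] at this
      rw [tr, hy] at this
      exact one_ne_zero this
    · intro h
      refine ⟨der (der f a) b 0, fun x => ?_⟩
      rw [key, h]; simp [tr]
  rw [hiff, hM, CharTwo.add_eq_zero]

/-- The relative trace `x ↦ x + x^(2^r)` as an additive map. -/
def auxPhi (r n : ℕ) : Fq n →+ Fq n where
  toFun x := x + x ^ 2 ^ r
  map_zero' := by simp
  map_add' x y := by rw [aux_sadd]; ring

theorem aux_phi (r n : ℕ) (x : Fq n) : auxPhi r n x = x + x ^ 2 ^ r := rfl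

theorem aux_ker (r n : ℕ) (x : Fq n) : x ∈ (auxPhi r n).ker ↔ x ^ 2 ^ r = x := by
  rw [AddMonoidHom.mem_ker, aux_phi, CharTwo.add_eq_zero, eq_comm]

theorem aux_count (r n : ℕ) (hr : 0 < r) (hn : n = 2 * r) :
    Nat.card (auxPhi r n).ker = 2 ^ r ∧ ∀ s : Fq n, s ^ 2 ^ r = s → ∃ b, auxPhi r n b = s := by
  have hle : Nat.card (auxPhi r n).ker ≤ 2 ^ r := by
    classical
    have hq : 1 < 2 ^ r := Nat.one_lt_two_pow (by omega)
    set P : Polynomial (Fq n) := Polynomial.X ^ 2 ^ r - Polynomial.X with hP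
    have hd : P.natDegree = 2 ^ r := FiniteField.X_pow_card_sub_X_natDegree_eq _ hq
    have hP0 : P ≠ 0 := FiniteField.X_pow_card_sub_X_ne_zero _ hq
    have hsub : ((auxPhi r n).ker : Set (Fq n)) ⊆ (P.roots.toFinset : Set (Fq n)) := by
      intro x hx
      have hx' := (aux_ker r n x).1 hx
      simp [hP0, Polynomial.IsRoot, hP, hx', sub_eq_zero] at *
      exact hP0
    have := Set.ncard_le_ncard hsub (Finset.finite_toSet _)
    rw [Set.ncard_coe_finset] at this
    have h2 : Nat.card (auxPhi r n).ker = ((auxPhi r n).ker : Set (Fq n)).ncard := rfl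
    rw [h2]
    exact this.trans ((Multiset.toFinset_card_le _).trans ((Polynomial.card_roots' P).trans hd.le))
  have hrk : (auxPhi r n).range ≤ (auxPhi r n).ker := by
    rintro _ ⟨b, rfl⟩
    rw [aux_ker, aux_phi, aux_sadd, aux_invol r n hr hn, add_comm]
  have hrle : Nat.card (auxPhi r n).range ≤ Nat.card (auxPhi r n).ker :=
    AddSubgroup.card_le_of_le hrk
  have hprod : Nat.card (auxPhi r n).ker * Nat.card (auxPhi r n).range = 2 ^ r * 2 ^ r := by
    rw [← AddSubgroup.index_ker, AddSubgroup.card_mul_index, GaloisField.card 2 n (by omega), hn,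
      two_mul, pow_add]
  have hpos : 0 < 2 ^ r := by positivity
  have hk : Nat.card (auxPhi r n).ker = 2 ^ r := by nlinarith
  refine ⟨hk, fun s hs => ?_⟩
  have heq : (auxPhi r n).range = (auxPhi r n).ker := by
    apply AddSubgroup.eq_of_le_of_card_ge hrk
    rw [hk] at hprod ⊢
    exact (Nat.eq_of_mul_eq_mul_left hpos hprod).ge
  have : s ∈ (auxPhi r n).range := by rw [heq, aux_ker]; exact hs
  exact this

/-- Linear-kernel sizes for derivatives of `tr(x^(2^r+3))`, `n = 2r`, odd `r`. -/
theorem linKer_card_der_odd_r (r n : ℕ) (hr : 0 < r) (hrodd : Odd r) (hn : n = 2 * r)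
    (f : Fq n → ZMod 2) (hf : ∀ x, f x = tr (x ^ (2 ^ r + 3))) :
    ∀ a : Fq n, a ≠ 0 →
      (a ^ (2 ^ r) = a → (linKer (der f a)).ncard = 2 ^ (r + 1)) ∧
      (a ^ (2 ^ r) ≠ a → (linKer (der f a)).ncard = 4) := by
  intro a ha
  have two : (2 : Fq n) = 0 := CharTwo.two_eq_zero
  obtain ⟨hcard, hsurj⟩ := aux_count r n hr hn
  have hmem := aux_mem r n hr hn f hf a
  constructor
  · intro haK
    obtain ⟨m, hm⟩ : ∃ m, 3 * m + 1 = 2 * 2 ^ r := by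
      obtain ⟨k, rfl⟩ := hrodd
      have h4 : 4 ^ k % 3 = 1 := by simp [Nat.pow_mod]
      refine ⟨(2 * 2 ^ (2 * k + 1)) / 3, ?_⟩
      have : 2 ^ (2 * k + 1) = 2 * 4 ^ k := by rw [pow_succ, pow_mul]; norm_num [mul_comm]
      rw [this]
      generalize 4 ^ k = u at h4
      omega
    have hcube : ∀ s : Fq n, s ≠ 0 → s ^ 2 ^ r = s → (s ^ 3) ^ m = s := by
      intro s hs0 hs
      apply mul_right_cancel₀ hs0
      rw [← pow_mul, ← pow_succ, hm, two_mul, pow_add, hs]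
    set s₀ := a⁻¹ ^ m with hs₀
    have hs3 : s₀ ^ 3 = a⁻¹ := by
      rw [hs₀, pow_right_comm]
      exact hcube _ (inv_ne_zero ha) (by rw [inv_pow, haK])
    have hs00 : s₀ ≠ 0 := pow_ne_zero _ (inv_ne_zero ha)
    have hs0K : s₀ ^ 2 ^ r = s₀ := by rw [hs₀, pow_right_comm, inv_pow, haK]
    obtain ⟨b₀, hb₀⟩ := hsurj s₀ hs0K
    have hset : linKer (der f a) = ((auxPhi r n).ker : Set (Fq n)) ∪
        (fun x => b₀ + x) '' ((auxPhi r n).ker : Set (Fq n)) := by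
      ext b
      rw [hmem, haK]
      have e1 : (a * (b + b ^ 2 ^ r) ^ 2 + b ^ 2 ^ r * (a + a) ^ 2) ^ 2 =
          a ^ 2 * auxPhi r n b ^ 4 := by
        rw [aux_char, aux_phi]; ring
      have e2 : a * b + b ^ 2 ^ r * a = a * auxPhi r n b := by rw [aux_phi]; ring
      rw [e1, e2]
      have hsK : auxPhi r n b ^ 2 ^ r = auxPhi r n b := by
        rw [aux_phi, aux_sadd, aux_invol r n hr hn, add_comm]
      have himg : b ∈ (fun x => b₀ + x) '' ((auxPhi r n).ker : Set (Fq n)) ↔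
          auxPhi r n b = s₀ := by
        constructor
        · rintro ⟨x, hx, rfl⟩
          have hx' : auxPhi r n x = 0 := hx
          simp [hx', hb₀]
        · intro h
          refine ⟨b - b₀, ?_, by simp⟩
          show auxPhi r n (b - b₀) = 0
          rw [map_sub, h, hb₀, sub_self]
      rw [Set.mem_union, himg]
      show _ ↔ auxPhi r n b = 0 ∨ _
      generalize auxPhi r n b = s at hsK
      constructor
      · intro h
        by_cases hs : s = 0
        · exact Or.inl hs
        · right
          have h3 : s ^ 3 = a⁻¹ := by
            apply mul_left_cancel₀ (mul_ne_zero ha (mul_ne_zero ha hs))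
            have hi : a * a⁻¹ = 1 := mul_inv_cancel₀ ha
            linear_combination h - a * s * hi
          rw [← hcube s hs hsK, h3]
      · rintro (h | h)
        · simp [h]
        · have : a * s ^ 3 = 1 := by rw [h, hs3, mul_inv_cancel₀ ha]
          linear_combination a * s * this
    have hc1 : ((auxPhi r n).ker : Set (Fq n)).ncard = 2 ^ r := hcard
    rw [hset, Set.ncard_union_eq, Set.ncard_image_of_injective _ (add_right_injective b₀), hc1]
    · ring
    · rw [Set.disjoint_left]
      rintro _ hx ⟨y, hy, rfl⟩
      have hx' : auxPhi r n (b₀ + y) = 0 := hx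
      have hy' : auxPhi r n y = 0 := hy
      rw [map_add, hy', hb₀, add_zero] at hx'
      exact hs00 hx'
  · intro haK
    set A := a ^ 2 ^ r with hA
    have hAA : A ^ 2 ^ r = a := aux_invol r n hr hn a
    set t := a + A with ht
    have ht0 : t ≠ 0 := by
      rw [ht]; intro h; exact haK (CharTwo.add_eq_zero.1 h).symm
    have htK : t ^ 2 ^ r = t := by rw [ht, aux_sadd, hAA, add_comm]
    set c := (t ^ 3)⁻¹ with hc
    have hc0 : c ≠ 0 := inv_ne_zero (pow_ne_zero _ ht0)
    have hct : c * t ^ 3 = 1 := inv_mul_cancel₀ (pow_ne_zero _ ht0)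
    have hcK : c ^ 2 ^ r = c := by rw [hc, inv_pow, pow_right_comm, htK]
    have hK : ∀ b : Fq n, b ^ 2 ^ r = b → (b ^ 2 * t ^ 4 = b * t ↔ b = 0 ∨ b = c) := by
      intro b _
      constructor
      · intro h
        by_cases hb : b = 0
        · exact Or.inl hb
        · right
          apply mul_left_cancel₀ (mul_ne_zero hb (pow_ne_zero 4 ht0))
          linear_combination h - b * t * hct
      · rintro (h | h)
        · simp [h]
        · rw [h]; linear_combination c * t * hct
    have hset : linKer (der f a) = {0, c, a, a + c} := by
      ext b
      rw [hmem]
      simp only [Set.mem_insert_iff, Set.mem_singleton_iff]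
      set B := b ^ 2 ^ r with hB
      have hBB : B ^ 2 ^ r = b := aux_invol r n hr hn b
      have conj : ∀ {x y : Fq n}, x = y → x ^ 2 ^ r = y ^ 2 ^ r := fun h => by rw [h]
      constructor
      · intro h
        have h1 := conj h
        rw [pow_right_comm] at h1
        simp only [aux_sadd, mul_pow, hAA, hBB, pow_right_comm _ 2 (2 ^ r), ← hA, ← hB] at h1
        have h2 : (t * (b + B) * (b + B + t)) ^ 2 = 0 := by
          rw [ht] at h1 h ⊢
          grind
        have h3 : b + B = 0 ∨ b + B + t = 0 := by
          have := pow_eq_zero_iff (two_ne_zero) |>.1 h2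
          rcases mul_eq_zero.1 this with h | h
          · exact Or.inl ((mul_eq_zero.1 h).resolve_left ht0)
          · exact Or.inr h
        rcases h3 with h3 | h3
        · have hbB : B = b := (CharTwo.add_eq_zero.1 h3).symm
          have := (hK b hbB).1 (by rw [hbB] at h; rw [ht] at h ⊢; grind)
          tauto
        · have hbK : (b + a) ^ 2 ^ r = b + a := by
            rw [aux_sadd, ← hA, ← hB]; grind
          have hBe : B = b + a + A := by grind
          have := (hK (b + a) hbK).1 (by rw [hBe] at h; rw [ht] at h ⊢; grind)
          rcases this with h | h
          · right; right; left; exact CharTwo.add_eq_zero.1 h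
          · right; right; right; grind
      · have h1 := fun b hb => (hK b hb).2
        have hcc := h1 c hcK (Or.inr rfl)
        rintro (h | h | h | h)
        · have : B = 0 := by rw [hB, h]; simp
          rw [this, h]; ring_nf
        · have : B = c := by rw [hB, h, hcK]
          rw [this, h]; rw [ht] at hcc ⊢; grind
        · have : B = A := by rw [hB, h]
          rw [this, h]; grind
        · have : B = A + c := by rw [hB, h, aux_sadd, hcK]
          rw [this, h]; rw [ht] at hcc ⊢; grind
    have hac : a ≠ c := by
      intro h; apply haK; rw [hA, h, hcK]
    have hac0 : a + c ≠ 0 := by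
      intro h; exact hac (CharTwo.add_eq_zero.1 h)
    rw [hset, Set.ncard_insert_of_notMem, Set.ncard_insert_of_notMem, Set.ncard_pair]
    · intro h; exact hc0 (by linear_combination -h)
    · simp only [Set.mem_insert_iff, Set.mem_singleton_iff]
      rintro (h | h)
      · exact hac h.symm
      · exact ha (by linear_combination -h)
    · simp only [Set.mem_insert_iff, Set.mem_singleton_iff]
      rintro (h | h | h)
      · exact hc0 h.symm
      · exact ha h.symm
      · exact hac0 h.symm
end
end

section
/- Let n be an even positive integer. For every a ∈ F with a ≠ 0, the number of b ∈ F \ {0, 1} such that the equation R_{a,b}(x) = 0 has exactly 4 solutions x ∈ F is at least (2^{n+1} − 2^{n/2 + 1} − 4)/3. -/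
noncomputable section

/-- The polynomial map `R_{a,b}` from the paper. -/
def Rpoly {n : ℕ} (a b x : Fq n) : Fq n :=
  a ^ 30 * (b ^ 2 + b) ^ 6 * ((x ^ 2 + x) ^ 2 + (x ^ 2 + x) * (b ^ 2 + b)) ^ 4
    + a ^ 15 * (b ^ 2 + b) ^ 5 * ((x ^ 2 + x) ^ 2 + (x ^ 2 + x) * (b ^ 2 + b))

/-- The polynomial map `Q_{a,b}` from the paper. -/
def Qpoly {n : ℕ} (a b x : Fq n) : Fq n :=
  ((b ^ 2 + b)⁻¹) ^ 4 * Rpoly a b x * (Rpoly a b x + 1)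

/-- The polynomial map `P_{a,b}` from the paper. -/
def Ppoly {n : ℕ} (a b x : Fq n) : Fq n :=
  Qpoly a b x * (Qpoly a b x + 1)

namespace CountB

open Classical in
/-- The sign character of `ZMod 2`. -/
def sgn (t : ZMod 2) : ℤ := if t = 0 then 1 else -1

lemma sgn_add (s t : ZMod 2) : sgn (s + t) = sgn s * sgn t := by
  unfold sgn
  revert s t
  decide

lemma sgn_le (t : ZMod 2) : sgn t ≤ 1 := by
  unfold sgn; split_ifs <;> norm_num

lemma sgn_ge (t : ZMod 2) : -1 ≤ sgn t := by
  unfold sgn; split_ifs <;> norm_num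

lemma sgn_ne {t : ZMod 2} (h : t ≠ 0) : sgn t = -1 := by
  unfold sgn; rw [if_neg h]

section

set_option linter.unusedSectionVars false

variable {F : Type} [Field F] [Fintype F] [CharP F 2] [Algebra (ZMod 2) F]

lemma trace_sq (x : F) : Algebra.trace (ZMod 2) F (x ^ 2) = Algebra.trace (ZMod 2) F x := by
  have h := Algebra.trace_eq_of_algEquiv (FiniteField.frobeniusAlgEquivOfAlgebraic (ZMod 2) F) x
  rw [← h]
  simp [ZMod.card]

/-- The quadratic-form character. -/
def psi (x : F) : ℤ := sgn (Algebra.trace (ZMod 2) F x)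

lemma psi_add (x y : F) : psi (x + y) = psi x * psi y := by
  unfold psi; rw [map_add, sgn_add]

lemma psi_sq (x : F) : psi (x ^ 2) = psi x := by
  unfold psi; rw [trace_sq]

lemma exists_psi {w : F} (hw : w ≠ 0) : ∃ x : F, psi (x ^ 2 * w) = -1 := by
  obtain ⟨y, hy⟩ : ∃ y : F, Algebra.trace (ZMod 2) F (w * y) ≠ 0 := by
    have htr := (traceForm_nondegenerate (ZMod 2) F).1 w
    simp_rw [Algebra.traceForm_apply] at htr
    by_contra! hf
    exact hw (htr hf)
  obtain ⟨x, rfl⟩ : ∃ x : F, x ^ 2 = y := by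
    obtain ⟨x, hx⟩ := (FiniteField.isSquare_of_char_two (ringChar.eq F 2) y)
    exact ⟨x, by rw [hx, sq]⟩
  exact ⟨x, by rw [mul_comm]; exact sgn_ne hy⟩

lemma inner_sum {u : F} (hu : u ^ 4 ≠ u) : ∑ x : F, psi (x ^ 2 * u + x * u ^ 2) = 0 := by
  have hw : u + u ^ 4 ≠ 0 := by
    intro h
    exact hu (CharTwo.add_eq_zero.mp h).symm
  have key : ∀ x : F, psi (x ^ 2 * u + x * u ^ 2) = psi (x ^ 2 * (u + u ^ 4)) := by
    intro x
    rw [mul_add, psi_add, psi_add, ← psi_sq (x * u ^ 2)]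
    congr 2; ring
  simp_rw [key]
  obtain ⟨x₀, h₀⟩ := exists_psi hw
  have h1 : ∑ x : F, psi (x ^ 2 * (u + u ^ 4)) = ∑ x : F, psi ((x + x₀) ^ 2 * (u + u ^ 4)) :=
    (Equiv.sum_comp (Equiv.addRight x₀) (fun x => psi (x ^ 2 * (u + u ^ 4)))).symm
  have h2 : ∀ x : F, psi ((x + x₀) ^ 2 * (u + u ^ 4)) = - psi (x ^ 2 * (u + u ^ 4)) := by
    intro x
    rw [CharTwo.add_sq, add_mul, psi_add, h₀]; ring
  simp_rw [h2, Finset.sum_neg_distrib] at h1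
  linarith

open Classical in
lemma card_fix : (Finset.univ.filter (fun u : F => u ^ 4 = u)).card ≤ 4 := by
  have hs : Finset.univ.filter (fun u : F => u ^ 4 = u) ⊆
      insert 0 (Polynomial.nthRoots 3 (1 : F)).toFinset := by
    intro u hu
    simp only [Finset.mem_filter, Finset.mem_univ, true_and] at hu
    simp only [Finset.mem_insert, Multiset.mem_toFinset]
    by_cases h : u = 0
    · exact Or.inl h
    · right
      rw [Polynomial.mem_nthRoots (by norm_num)]
      apply mul_right_cancel₀ h
      linear_combination hu
  refine (Finset.card_le_card hs).trans ((Finset.card_insert_le _ _).trans ?_)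
  have := Multiset.toFinset_card_le (Polynomial.nthRoots 3 (1 : F))
  have := Polynomial.card_nthRoots 3 (1 : F)
  omega

lemma S_sq : (∑ x : F, psi (x ^ 3)) ^ 2 ≤ 4 * (Fintype.card F : ℤ) := by
  classical
  have h1 : (∑ x : F, psi (x ^ 3)) ^ 2
      = ∑ u : F, psi (u ^ 3) * ∑ x : F, psi (x ^ 2 * u + x * u ^ 2) := by
    rw [sq, Finset.sum_mul]
    simp_rw [Finset.mul_sum]
    have : ∀ x : F, ∑ y : F, psi (x ^ 3) * psi (y ^ 3)
        = ∑ u : F, psi (u ^ 3) * psi (x ^ 2 * u + x * u ^ 2) := by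
      intro x
      rw [← Equiv.sum_comp (Equiv.addLeft x)]
      refine Finset.sum_congr rfl fun u _ => ?_
      simp only [Equiv.coe_addLeft]
      rw [← psi_add, ← psi_add]
      congr 1
      have h2 : (2 : F) = 0 := CharTwo.two_eq_zero
      linear_combination (x ^ 3 + x ^ 2 * u + x * u ^ 2) * h2
    rw [Finset.sum_congr rfl fun x _ => this x]
    exact Finset.sum_comm
  rw [h1]
  have h2 : ∀ u : F, psi (u ^ 3) * ∑ x : F, psi (x ^ 2 * u + x * u ^ 2)
      ≤ if u ^ 4 = u then (Fintype.card F : ℤ) else 0 := by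
    intro u
    split_ifs with hu
    · have hc : |∑ x : F, psi (x ^ 2 * u + x * u ^ 2)| ≤ (Fintype.card F : ℤ) := by
        refine (Finset.abs_sum_le_sum_abs _ _).trans ?_
        calc _ ≤ ∑ x : F, (1 : ℤ) := Finset.sum_le_sum fun x _ => abs_le.mpr ⟨sgn_ge _, sgn_le _⟩
          _ = _ := by simp
      have hp : |psi (u ^ 3)| ≤ 1 := abs_le.mpr ⟨sgn_ge _, sgn_le _⟩
      refine (le_abs_self _).trans ?_
      rw [abs_mul]
      calc _ ≤ 1 * (Fintype.card F : ℤ) := mul_le_mul hp hc (abs_nonneg _) (by norm_num)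
        _ = _ := one_mul _
    · rw [inner_sum hu, mul_zero]
  refine (Finset.sum_le_sum fun u _ => h2 u).trans ?_
  rw [← Finset.sum_filter, Finset.sum_const, nsmul_eq_mul]
  have := card_fix (F := F)
  gcongr
  exact_mod_cast this

open Classical in
lemma fiber_le (t : F) :
    ((Finset.univ.filter (fun b : F => b ^ 2 + b = t)).card : ℤ) ≤ 1 + psi t := by
  by_cases h : ∃ b : F, b ^ 2 + b = t
  · obtain ⟨b, rfl⟩ := h
    have hp : psi (b ^ 2 + b) = 1 := by
      rw [psi_add, psi_sq]; unfold psi sgn; split_ifs <;> norm_num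
    rw [hp]
    have hs : Finset.univ.filter (fun c : F => c ^ 2 + c = b ^ 2 + b) ⊆ {b, b + 1} := by
      intro c hc
      simp only [Finset.mem_filter, Finset.mem_univ, true_and] at hc
      simp only [Finset.mem_insert, Finset.mem_singleton]
      have h2 : (2 : F) = 0 := CharTwo.two_eq_zero
      have : (c - b) * (c - (b + 1)) = 0 := by
        linear_combination hc + (b ^ 2 + b - c * b - c) * h2
      rcases mul_eq_zero.mp this with h | h
      · left; exact sub_eq_zero.mp h
      · right; exact sub_eq_zero.mp h
    have := (Finset.card_le_card hs).trans Finset.card_le_two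
    exact_mod_cast this
  · rw [Finset.filter_false_of_mem]
    · have := sgn_ge (Algebra.trace (ZMod 2) F t)
      unfold psi; simp; linarith
    · intro b _ hb
      exact h ⟨b, hb⟩

open Classical in
lemma cube_fiber {w : F} (hw : w ^ 2 + w + 1 = 0) {c : F} (hc : c ≠ 0) :
    3 ≤ (Finset.univ.filter (fun d : F => d ^ 3 = c ^ 3)).card := by
  have h2 : (2 : F) = 0 := CharTwo.two_eq_zero
  have hw0 : w ≠ 0 := by rintro rfl; simp at hw
  have hw1 : w ≠ 1 := by
    rintro rfl
    have : (1 : F) = 0 := by linear_combination hw - h2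
    exact one_ne_zero this
  have hw3 : w ^ 3 = 1 := by linear_combination (w - 1) * hw
  have hs : ({c, c * w, c * w ^ 2} : Finset F) ⊆ Finset.univ.filter (fun d : F => d ^ 3 = c ^ 3) := by
    intro d hd
    simp only [Finset.mem_insert, Finset.mem_singleton] at hd
    simp only [Finset.mem_filter, Finset.mem_univ, true_and]
    rcases hd with rfl | rfl | rfl
    · rfl
    · rw [mul_pow, hw3, mul_one]
    · linear_combination c ^ 3 * (w ^ 3 + 1) * hw3
  refine le_trans (le_of_eq ?_) (Finset.card_le_card hs)
  rw [Finset.card_eq_three.mpr ⟨c, c * w, c * w ^ 2, ?_, ?_, ?_, rfl⟩]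
  · intro h
    exact hw1 (mul_left_cancel₀ hc (by rw [← h, mul_one]))
  · intro h
    have h5 : w ^ 2 = 1 := mul_left_cancel₀ hc (by rw [← h, mul_one])
    apply hw1
    linear_combination hw3 - w * h5
  · intro h
    have h5 := mul_left_cancel₀ hc h
    apply hw1
    apply mul_left_cancel₀ hw0
    linear_combination -h5

open Classical in
lemma count {w : F} (hw : w ^ 2 + w + 1 = 0) :
    2 * (Fintype.card F : ℤ) - 4 - ∑ x : F, psi (x ^ 3) ≤
    3 * ((Finset.univ.filter (fun b : F => ∀ c : F, c ^ 3 ≠ b ^ 2 + b)).card : ℤ) := by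
  have hN : ∑ b : F, ((Finset.univ.filter (fun c : F => c ^ 3 = b ^ 2 + b)).card : ℤ)
      ≤ Fintype.card F + ∑ x : F, psi (x ^ 3) := by
    have h1 : ∑ b : F, ((Finset.univ.filter (fun c : F => c ^ 3 = b ^ 2 + b)).card : ℤ)
      = ∑ c : F, ((Finset.univ.filter (fun b : F => b ^ 2 + b = c ^ 3)).card : ℤ) := by
      simp_rw [Finset.card_filter]
      push_cast
      rw [Finset.sum_comm]
      simp_rw [eq_comm]
    rw [h1]
    refine (Finset.sum_le_sum fun c _ => fiber_le (c ^ 3)).trans ?_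
    simp [Finset.sum_add_distrib]
  have hpt : ∀ b : F, (3 : ℤ) ≤ ((Finset.univ.filter (fun c : F => c ^ 3 = b ^ 2 + b)).card : ℤ)
      + 3 * (if ∀ c : F, c ^ 3 ≠ b ^ 2 + b then 1 else 0)
      + 2 * (if b = 0 ∨ b = 1 then 1 else 0) := by
    intro b
    by_cases hb : b = 0 ∨ b = 1
    · have h0 : b ^ 2 + b = 0 := by
        rcases hb with rfl | rfl
        · simp
        · rw [one_pow]; exact CharTwo.add_self_eq_zero 1
      have : 1 ≤ (Finset.univ.filter (fun c : F => c ^ 3 = b ^ 2 + b)).card := by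
        rw [Nat.one_le_iff_ne_zero, Finset.card_ne_zero]
        exact ⟨0, by simp [h0]⟩
      rw [if_pos hb]
      split_ifs <;> omega
    · by_cases hc : ∀ c : F, c ^ 3 ≠ b ^ 2 + b
      · rw [if_pos hc]; split_ifs <;> omega
      · rw [if_neg hc, if_neg hb]
        push Not at hc hb
        obtain ⟨c, hc⟩ := hc
        have hc0 : c ≠ 0 := by
          rintro rfl
          have : b * (b + 1) = 0 := by linear_combination -hc
          rcases mul_eq_zero.mp this with h | h
          · exact hb.1 h
          · exact hb.2 (CharTwo.add_eq_zero.mp h)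
        have := cube_fiber hw hc0
        rw [hc] at this
        omega
  have hs := Finset.sum_le_sum fun b (_ : b ∈ (Finset.univ : Finset F)) => hpt b
  rw [Finset.sum_add_distrib, Finset.sum_add_distrib, ← Finset.mul_sum, ← Finset.mul_sum,
    Finset.sum_boole, Finset.sum_boole] at hs
  have h01 : (Finset.univ.filter (fun b : F => b = 0 ∨ b = 1)).card ≤ 2 := by
    refine (Finset.card_le_card (t := {0, 1}) ?_).trans Finset.card_le_two
    intro b; simp
  simp only [Finset.sum_const, Finset.card_univ, nsmul_eq_mul] at hs
  have : ((Finset.univ.filter (fun b : F => b = 0 ∨ b = 1)).card : ℤ) ≤ 2 := by exact_mod_cast h01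
  linarith

lemma exists_omega (m : ℕ) (h : Fintype.card F = 4 ^ m) (hm : 0 < m) :
    ∃ w : F, w ^ 2 + w + 1 = 0 := by
  classical
  have hd : 3 ∣ Fintype.card Fˣ := by
    rw [Fintype.card_units, h]
    have := Nat.sub_dvd_pow_sub_pow 4 1 m
    simpa using this
  have : Fact (Nat.Prime 3) := ⟨Nat.prime_three⟩
  obtain ⟨g, hg⟩ := exists_prime_orderOf_dvd_card 3 hd
  have h3 : g ^ 3 = 1 := by rw [← hg]; exact pow_orderOf_eq_one g
  have h1 : (g : F) ≠ 1 := by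
    intro h
    have : g = 1 := Units.ext h
    rw [this, orderOf_one] at hg
    norm_num at hg
  have h3' : (g : F) ^ 3 = 1 := by
    rw [← Units.val_pow_eq_pow_val, h3, Units.val_one]
  refine ⟨g, mul_left_cancel₀ (sub_ne_zero.mpr h1) ?_⟩
  linear_combination h3'

lemma four_roots {a b : F} (ha : a ≠ 0) (hb : ∀ c : F, c ^ 3 ≠ b ^ 2 + b) :
    b ≠ 0 ∧ b ≠ 1 ∧ {x : F | a ^ 30 * (b ^ 2 + b) ^ 6 * ((x ^ 2 + x) ^ 2 + (x ^ 2 + x) * (b ^ 2 + b)) ^ 4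
    + a ^ 15 * (b ^ 2 + b) ^ 5 * ((x ^ 2 + x) ^ 2 + (x ^ 2 + x) * (b ^ 2 + b)) = 0}.ncard = 4 := by
  classical
  have h2 : (2 : F) = 0 := CharTwo.two_eq_zero
  have hβ : b ^ 2 + b ≠ 0 := fun h => hb 0 (by rw [h]; ring)
  have hb0 : b ≠ 0 := by rintro rfl; simp at hβ
  have hb1 : b ≠ 1 := by
    rintro rfl; apply hβ; linear_combination h2
  refine ⟨hb0, hb1, ?_⟩
  have hset : {x : F | a ^ 30 * (b ^ 2 + b) ^ 6 * ((x ^ 2 + x) ^ 2 + (x ^ 2 + x) * (b ^ 2 + b)) ^ 4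
    + a ^ 15 * (b ^ 2 + b) ^ 5 * ((x ^ 2 + x) ^ 2 + (x ^ 2 + x) * (b ^ 2 + b)) = 0}
      = (({0, 1, b, b + 1} : Finset F) : Set F) := by
    ext x
    simp only [Set.mem_ofPred_eq, Finset.coe_insert, Finset.coe_singleton, Set.mem_insert_iff,
      Set.mem_singleton_iff]
    set z := (x ^ 2 + x) ^ 2 + (x ^ 2 + x) * (b ^ 2 + b) with hz
    have hfac : z = x * (x - 1) * (x - b) * (x - (b + 1)) := by
      rw [hz]
      linear_combination (x ^ 3 * (b + 2) + x * b + x * b ^ 2 - x ^ 2 * b) * h2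
    constructor
    · intro h
      have hz0 : z = 0 := by
        by_contra hne
        have h5 : a ^ 15 * (b ^ 2 + b) * z ^ 3 + 1 = 0 := by
          have hk : a ^ 15 * (b ^ 2 + b) ^ 5 * z ≠ 0 := 
            mul_ne_zero (mul_ne_zero (pow_ne_zero _ ha) (pow_ne_zero _ hβ)) hne
          apply mul_left_cancel₀ hk
          linear_combination h
        apply hb ((a ^ 5 * z)⁻¹)
        have h6 : a ^ 5 * z ≠ 0 := mul_ne_zero (pow_ne_zero _ ha) hne
        rw [inv_pow]
        apply inv_eq_of_mul_eq_one_right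
        linear_combination h5 - h2
      rw [hfac] at hz0
      simp only [mul_eq_zero, sub_eq_zero] at hz0
      tauto
    · intro h
      have hz0 : z = 0 := by
        rw [hfac]
        simp only [mul_eq_zero, sub_eq_zero]
        tauto
      rw [hz0]; ring
  rw [hset, Set.ncard_coe_finset]
  have hbb : b + 1 ≠ 0 := fun h => hb1 (CharTwo.add_eq_zero.mp h)
  rw [Finset.card_insert_of_notMem, Finset.card_insert_of_notMem, Finset.card_insert_of_notMem,
    Finset.card_singleton]
  · simp
  · simp [hb0, Ne.symm hb1]
  · simp [Ne.symm hb0, Ne.symm hbb]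

end

end CountB

/-- For even `n`, many `b` give exactly 4 roots of `R_{a,b}`. -/
theorem count_b_Rpoly_four_roots (n : ℕ) (hn : 0 < n) (hev : Even n)
    (a : Fq n) (ha : a ≠ 0) :
    ({b : Fq n | b ≠ 0 ∧ b ≠ 1 ∧ {x : Fq n | Rpoly a b x = 0}.ncard = 4}.ncard : ℝ)
      ≥ ((2:ℝ) ^ ((n:ℝ) + 1) - (2:ℝ) ^ ((n:ℝ) / 2 + 1) - 4) / 3 := by
  classical
  obtain ⟨m, rfl⟩ := hev
  letI : Fintype (Fq (m + m)) := Fintype.ofFinite _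
  have hcard : Fintype.card (Fq (m + m)) = 4 ^ m := by
    rw [← Nat.card_eq_fintype_card, GaloisField.card 2 (m + m) (by omega), ← two_mul, pow_mul]
    norm_num
  obtain ⟨w, hw⟩ := CountB.exists_omega (F := Fq (m + m)) m hcard (by omega)
  have h1 := CountB.count hw
  have h2 := CountB.S_sq (F := Fq (m + m))
  set S : ℤ := ∑ x : Fq (m + m), CountB.psi (x ^ 3) with hS
  have hS2 : S ≤ 2 * 2 ^ m := by
    refine (le_abs_self S).trans (abs_le_of_sq_le_sq ?_ (by positivity))
    rw [hcard] at h2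
    calc S ^ 2 ≤ _ := h2
      _ = _ := by
        push_cast
        rw [mul_pow, ← pow_mul, mul_comm m 2, pow_mul]; norm_num
  have hle : (Finset.univ.filter (fun b : Fq (m + m) => ∀ c : Fq (m + m), c ^ 3 ≠ b ^ 2 + b)).card
      ≤ {b : Fq (m + m) | b ≠ 0 ∧ b ≠ 1 ∧ {x : Fq (m + m) | Rpoly a b x = 0}.ncard = 4}.ncard := by
    rw [← Set.ncard_coe_finset]
    apply Set.ncard_le_ncard _ (Set.toFinite _)
    intro b hb
    simp only [Finset.coe_filter, Finset.mem_univ, true_and, Set.mem_ofPred_eq] at hb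
    exact CountB.four_roots ha hb
  set K := {b : Fq (m + m) | b ≠ 0 ∧ b ≠ 1 ∧ {x : Fq (m + m) | Rpoly a b x = 0}.ncard = 4}.ncard
  have hfin : 2 * (4 : ℤ) ^ m - 4 - 2 * 2 ^ m ≤ 3 * (K : ℤ) := by
    rw [hcard] at h1
    push_cast at h1
    have : ((Finset.univ.filter (fun b : Fq (m + m) => ∀ c : Fq (m + m), c ^ 3 ≠ b ^ 2 + b)).card : ℤ)
      ≤ K := by exact_mod_cast hle
    linarith
  have hfinR : 2 * (4 : ℝ) ^ m - 4 - 2 * 2 ^ m ≤ 3 * (K : ℝ) := by exact_mod_cast hfin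
  have e1 : (2:ℝ) ^ (((m + m : ℕ):ℝ) + 1) = 2 * 4 ^ m := by
    rw [Real.rpow_add_one (by norm_num), Real.rpow_natCast, ← two_mul, pow_mul]; norm_num; ring
  have e2 : (2:ℝ) ^ (((m + m : ℕ):ℝ) / 2 + 1) = 2 * 2 ^ m := by
    have : (((m + m : ℕ):ℝ) / 2) = (m : ℝ) := by push_cast; ring
    rw [this, Real.rpow_add_one (by norm_num), Real.rpow_natCast]; ring
  rw [e1, e2]
  linarith
end
end

section
/- Let n be an even positive integer, and let a, b ∈ F with a ≠ 0 and b ∉ {0, 1}. If the equation R_{a,b}(x) = 0 has exactly 4 solutions x ∈ F, then the equation P_{a,b}(x) = 0 has at most 16 solutions x ∈ F. -/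
noncomputable section

theorem Rpoly_add_aux {n : ℕ} (a b x y : Fq n) :
    Rpoly a b (x + y) = Rpoly a b x + Rpoly a b y := by
  have h2 : ∀ u v : Fq n, (u + v) ^ 2 = u ^ 2 + v ^ 2 := fun u v => add_pow_char u v 2
  have h4 : ∀ u v : Fq n, (u + v) ^ 4 = u ^ 4 + v ^ 4 := by
    intro u v
    have : (u + v) ^ 4 = ((u + v) ^ 2) ^ 2 := by ring
    rw [this, h2, h2]; ring
  have e : ((x + y) ^ 2 + (x + y)) ^ 2 + ((x + y) ^ 2 + (x + y)) * (b ^ 2 + b)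
      = ((x ^ 2 + x) ^ 2 + (x ^ 2 + x) * (b ^ 2 + b))
        + ((y ^ 2 + y) ^ 2 + (y ^ 2 + y) * (b ^ 2 + b)) := by
    simp only [h2]; ring
  unfold Rpoly
  rw [e, h4]; ring

/-- Even `n`: exactly 4 roots of `R_{a,b}` implies at most 16 roots of `P_{a,b}`. -/
theorem Ppoly_roots_le_sixteen (n : ℕ) (hn : 0 < n) (hev : Even n)
    (a b : Fq n) (ha : a ≠ 0) (hb0 : b ≠ 0) (hb1 : b ≠ 1)
    (hR : {x : Fq n | Rpoly a b x = 0}.ncard = 4) :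
    {x : Fq n | Ppoly a b x = 0}.ncard ≤ 16 := by
  classical
  haveI : Fintype (Fq n) := Fintype.ofFinite _
  have hneg : ∀ u : Fq n, u + u = 0 := fun u => CharTwo.add_self_eq_zero u
  set c : Fq n := b ^ 2 + b with hc
  have hc0 : c ≠ 0 := by
    intro h
    have : b * (b + 1) = 0 := by rw [← h, hc]; ring
    rcases mul_eq_zero.1 this with h | h
    · exact hb0 h
    · apply hb1
      have := hneg 1
      linear_combination h - this
  -- the possible values of `R`
  let p : Polynomial (Fq n) := Polynomial.X ^ 4 + (Polynomial.C (c ^ 4 + 1) * Polynomial.X ^ 2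
    + Polynomial.C (c ^ 4) * Polynomial.X)
  have hdeg : p.natDegree = 4 := by
    simp only [p]
    compute_degree!
  have hp0 : p ≠ 0 := by
    intro h
    rw [h] at hdeg
    simp at hdeg
  have hval : ∀ x, Ppoly a b x = 0 → p.IsRoot (Rpoly a b x) := by
    intro x hx
    have h1 := hneg 1
    simp only [Ppoly, Qpoly, ← hc] at hx
    generalize Rpoly a b x = r at hx ⊢
    have h3 : c ^ 4 * c⁻¹ ^ 4 = 1 := by rw [← mul_pow, mul_inv_cancel₀ hc0, one_pow]
    have h2 : r * (r + 1) * (r * (r + 1) + c ^ 4) = 0 := by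
      linear_combination c ^ 8 * hx
        - (r * (r + 1) * (r * (r + 1)) * (c ^ 4 * c⁻¹ ^ 4 + 1) + r * (r + 1) * c ^ 4) * h3
    simp only [p, Polynomial.IsRoot, Polynomial.eval_add, Polynomial.eval_mul,
      Polynomial.eval_pow, Polynomial.eval_X, Polynomial.eval_C]
    linear_combination h2 - r ^ 3 * h1
  have hker : (Finset.univ.filter fun x : Fq n => Rpoly a b x = 0).card = 4 := by
    rw [← hR, ← Set.ncard_coe_finset]; simp
  have hP : {x : Fq n | Ppoly a b x = 0}
      = ((Finset.univ.filter fun x : Fq n => Ppoly a b x = 0) : Finset (Fq n)) := by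
    simp
  rw [hP, Set.ncard_coe_finset]
  have hroots : p.roots.toFinset.card ≤ 4 :=
    (Multiset.toFinset_card_le _).trans (hdeg ▸ Polynomial.card_roots' p)
  have key : (Finset.univ.filter fun x : Fq n => Ppoly a b x = 0).card
      ≤ 4 * p.roots.toFinset.card := by
    refine Finset.card_le_mul_card_image_of_maps_to (f := fun x => Rpoly a b x) ?_ 4 ?_
    · intro x hx
      simp only [Finset.mem_filter, Finset.mem_univ, true_and] at hx
      rw [Multiset.mem_toFinset, Polynomial.mem_roots hp0]
      exact hval x hx
    · intro v _
      rcases Finset.eq_empty_or_nonempty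
        ((Finset.univ.filter fun x : Fq n => Ppoly a b x = 0).filter
          fun x => Rpoly a b x = v) with h | ⟨x0, hx0⟩
      · rw [h]; simp
      · rw [← hker]
        apply Finset.card_le_card_of_injOn (fun x => x + x0)
        · intro x hx
          simp only [Finset.coe_filter, Finset.mem_filter, Finset.mem_univ, true_and,
            Set.mem_setOf_eq] at hx hx0 ⊢
          rw [Rpoly_add_aux, hx.2, hx0.2, hneg]
        · intro x _ y _ h
          exact add_right_cancel h
  omega
end
end
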